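/- arXiv:2407.02365 — 2 statements merged into one kernel-verified Lean document; each statement's English description precedes it below -/
import Mathlib

section
/- Let k ∈ (0,1) and q = e^{−πK'/K}. For every n ∈ ℕ, Kuznetsov's moment integrals satisfy 2 I_{n+1}^+ − I_n^− = 8 (π/K)^{2n+4} Σ_{m≥1} m^{2n+3} q^m/(1 − q^{2m}). -/
/-!
Write `a = K`, `b = K'`; the identity holds for arbitrary `a, b > 0`. With `x = s²` the four
integrals combine (`integral_cosh_part`, `integral_cos_part`) into `8 (A + (-1)^n B)`, where
`A = ∫ s^(2n+3) cosh(bs) / (2 (cosh²(bs) - cos²(as))) ds` and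
`B = ∫ s^(2n+3) cos(bs) / (2 (cosh²(as) - cos²(bs))) ds`, both over `(0, ∞)`.

Factoring `cosh² x - cos² y = sinh(x + iy) sinh(x - iy)` turns both kernels into absolutely
convergent exponential series:
* `A`-kernel: `½ Re coth((b + ia)s) / sinh(bs)`, a sum of `exp(-c s)` over
  `c = (2P+1)b + 2ria` with `|r| ≤ P` (`hasSum_inner`);
* `B`-kernel: `½ Re (1 / sinh((a + ib)s)) / sinh(as)`, a sum of `exp(-c' s)` where the `c'` are, up
  to a factor `±i`, the numbers `(2P+1)b + 2ria` with `|r| > P` (`hasSum_outerNodes`).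

Termwise integration, `∫ s^(2n+3) exp(-c s) ds = (2n+3)! / c^(2n+4)`, together with
`(±i)^(2n+4) = (-1)^n`, shows that `A + (-1)^n B` is the full sum
`(2n+3)! ∑_{P ≥ 0, r ∈ ℤ} ((2P+1)b + 2ria)^(-(2n+4))` (`hasSum_node`). For fixed `P`, the Lipschitz
formula evaluates the sum over `r` as `(π/a)^(2n+4) ∑_m m^(2n+3) q^((2P+1)m)`, and summing the
geometric series over `P` gives the claim (`tsum_node`).
-/

open MeasureTheory Real

/-- The complete elliptic integral of the first kind `K(k)`. -/
noncomputable def ellipticK (k : ℝ) : ℝ :=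
  ∫ θ in (0 : ℝ)..(π / 2), (1 - k ^ 2 * Real.sin θ ^ 2) ^ (-(1 / 2) : ℝ)

/-- Kuznetsov's moment integral `I_n^+`, realizing
`(1/2)∫_ℝ x^n dx/(cos(√x K) + cosh(√x K'))` with `√x = i√(−x)` for `x < 0`. -/
noncomputable def Iplus (k : ℝ) (n : ℕ) : ℝ :=
  (1 / 2) * (∫ x in Set.Ioi (0 : ℝ), x ^ n /
      (Real.cos (ellipticK k * Real.sqrt x) +
        Real.cosh (ellipticK (Real.sqrt (1 - k ^ 2)) * Real.sqrt x)))
  + ((-1 : ℝ) ^ n / 2) * (∫ x in Set.Ioi (0 : ℝ), x ^ n /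
      (Real.cosh (ellipticK k * Real.sqrt x) +
        Real.cos (ellipticK (Real.sqrt (1 - k ^ 2)) * Real.sqrt x)))

/-- Kuznetsov's moment integral `I_n^−`, realizing
`∫_ℝ x^{n+1} dx/(cos(√x K) − cosh(√x K'))` with `√x = i√(−x)` for `x < 0`. -/
noncomputable def Iminus (k : ℝ) (n : ℕ) : ℝ :=
  (∫ x in Set.Ioi (0 : ℝ), x ^ (n + 1) /
      (Real.cos (ellipticK k * Real.sqrt x) -
        Real.cosh (ellipticK (Real.sqrt (1 - k ^ 2)) * Real.sqrt x)))
  + (-1 : ℝ) ^ (n + 1) * (∫ x in Set.Ioi (0 : ℝ), x ^ (n + 1) /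
      (Real.cosh (ellipticK k * Real.sqrt x) -
        Real.cos (ellipticK (Real.sqrt (1 - k ^ 2)) * Real.sqrt x)))

/-! ### Gamma integrals and termwise integration -/

lemma integrableOn_pow_mul_exp_neg (j : ℕ) {c : ℝ} (hc : 0 < c) :
    IntegrableOn (fun s : ℝ => s ^ j * Real.exp (-c * s)) (Set.Ioi 0) := by
  have h := integrableOn_rpow_mul_exp_neg_mul_rpow (p := 1) (s := j) (b := c)
    (by have : (0:ℝ) ≤ j := by positivity
        linarith) one_pos hc
  simpa using h

lemma integral_pow_mul_exp_neg (j : ℕ) {c : ℝ} (hc : 0 < c) :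
    ∫ s in Set.Ioi (0 : ℝ), s ^ j * Real.exp (-c * s) = j.factorial / c ^ (j + 1) := by
  have h := Real.integral_rpow_mul_exp_neg_mul_Ioi (a := j + 1) (r := c) (by positivity) hc
  rw [Real.Gamma_nat_eq_factorial] at h
  have e : (1 / c) ^ ((j : ℝ) + 1) = 1 / c ^ (j + 1) := by
    rw [show ((j : ℝ) + 1) = ((j + 1 : ℕ) : ℝ) by push_cast; ring, Real.rpow_natCast, one_div_pow]
  simp only [add_sub_cancel_right, Real.rpow_natCast, e] at h
  simp only [neg_mul]
  rw [h]; ring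

lemma norm_pow_mul_cexp (j : ℕ) (c : ℂ) {s : ℝ} (hs : 0 < s) :
    ‖(s : ℂ) ^ j * Complex.exp (-c * s)‖ = s ^ j * Real.exp (-c.re * s) := by
  rw [norm_mul, norm_pow, Complex.norm_real, Complex.norm_exp, Real.norm_of_nonneg hs.le]
  simp

lemma integrableOn_pow_mul_cexp_neg (j : ℕ) {c : ℂ} (hc : 0 < c.re) :
    IntegrableOn (fun s : ℝ => (s : ℂ) ^ j * Complex.exp (-c * s)) (Set.Ioi 0) := by
  refine (integrableOn_pow_mul_exp_neg j hc).mono' ?_ ?_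
  · exact (by fun_prop : Continuous fun s : ℝ => (s : ℂ) ^ j * Complex.exp (-c * s)).aestronglyMeasurable
  · filter_upwards [ae_restrict_mem measurableSet_Ioi] with s hs
    exact (norm_pow_mul_cexp j c hs).le

lemma tendsto_pow_mul_cexp_neg (j : ℕ) {c : ℂ} (hc : 0 < c.re) :
    Filter.Tendsto (fun s : ℝ => (s : ℂ) ^ j * Complex.exp (-c * s)) Filter.atTop (nhds 0) := by
  rw [tendsto_zero_iff_norm_tendsto_zero]
  have h := tendsto_rpow_mul_exp_neg_mul_atTop_nhds_zero j c.re hc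
  refine h.congr' ?_
  filter_upwards [Filter.eventually_gt_atTop 0] with s hs
  rw [norm_pow_mul_cexp j c hs, Real.rpow_natCast]

/-- Euler's Gamma integral with a complex rate, by integration by parts. -/
lemma integral_pow_mul_cexp_neg (j : ℕ) {c : ℂ} (hc : 0 < c.re) :
    ∫ s in Set.Ioi (0 : ℝ), (s : ℂ) ^ j * Complex.exp (-c * s) = j.factorial / c ^ (j + 1) := by
  have hc0 : c ≠ 0 := by rintro rfl; simp at hc
  induction j with
  | zero =>
    have := integral_exp_mul_complex_Ioi (a := -c) (by simpa using hc) 0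
    simp only [pow_zero, one_mul, this]
    simp
  | succ j ih =>
    have hd : ∀ s ∈ Set.Ici (0 : ℝ), HasDerivAt
        (fun s : ℝ => (s : ℂ) ^ (j + 1) * Complex.exp (-c * s))
        (((j + 1 : ℕ) : ℂ) * ((s : ℂ) ^ j * Complex.exp (-c * s))
          - c * ((s : ℂ) ^ (j + 1) * Complex.exp (-c * s))) s := by
      intro s _
      have h1 : HasDerivAt (fun z : ℂ => z ^ (j + 1) * Complex.exp (-c * z))
        (((j + 1 : ℕ) : ℂ) * (s : ℂ) ^ j * Complex.exp (-c * s)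
          + (s : ℂ) ^ (j + 1) * (Complex.exp (-c * s) * (-c * 1))) s :=
        (hasDerivAt_pow (j + 1) (s : ℂ)).mul (((hasDerivAt_id (s : ℂ)).const_mul (-c)).cexp)
      convert! h1.comp_ofReal using 1
      ring
    have i1 := (integrableOn_pow_mul_cexp_neg j hc).const_mul ((j + 1 : ℕ) : ℂ)
    have i2 := (integrableOn_pow_mul_cexp_neg (j + 1) hc).const_mul c
    have h := integral_Ioi_of_hasDerivAt_of_tendsto' hd (i1.sub i2)
      (tendsto_pow_mul_cexp_neg (j + 1) hc)
    rw [integral_sub i1 i2, integral_const_mul, integral_const_mul, ih] at h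
    simp only [Complex.ofReal_zero, ne_eq, Nat.succ_ne_zero, not_false_eq_true, zero_pow,
      zero_mul, sub_zero] at h
    rw [eq_div_iff (pow_ne_zero _ hc0), pow_succ c (j + 1)]
    rw [sub_eq_zero] at h
    calc _ = (c * ∫ s in Set.Ioi (0 : ℝ), (s : ℂ) ^ (j + 1) * Complex.exp (-c * s))
            * c ^ (j + 1) := by ring
      _ = _ := by
        rw [← h, Nat.factorial_succ]
        field_simp
        push_cast
        ring

/-- Termwise integration of an exponential series against `s ^ j`. Summability of the integrals of
the norms is a condition on the real parts of the exponents only. -/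
lemma hasSum_integral_exp {ι : Type*} [Countable ι] (j : ℕ) (c : ι → ℂ) (hc : ∀ i, 0 < (c i).re)
    (hsum : Summable fun i => 1 / (c i).re ^ (j + 1)) {F : ℝ → ℂ}
    (hF : ∀ s : ℝ, 0 < s → HasSum (fun i => Complex.exp (-c i * s)) (F s)) :
    HasSum (fun i => (j.factorial : ℂ) / c i ^ (j + 1))
      (∫ s in Set.Ioi (0 : ℝ), (s : ℂ) ^ j * F s) := by
  have h := hasSum_integral_of_summable_integral_norm (μ := volume.restrict (Set.Ioi (0 : ℝ)))
    (F := fun i (s : ℝ) => (s : ℂ) ^ j * Complex.exp (-c i * s))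
    (fun i => integrableOn_pow_mul_cexp_neg j (hc i)) ?_
  · simp only [integral_pow_mul_cexp_neg j (hc _)] at h
    convert! h using 1
    refine setIntegral_congr_fun measurableSet_Ioi fun s hs => ?_
    rw [tsum_mul_left, (hF s hs).tsum_eq]
  · refine (hsum.mul_left (j.factorial : ℝ)).congr fun i => ?_
    rw [mul_one_div, ← integral_pow_mul_exp_neg j (hc i)]
    exact setIntegral_congr_fun measurableSet_Ioi fun s hs => (norm_pow_mul_cexp j (c i) hs).symm

/-! ### Geometric series -/

lemma sinh_ne_zero_of_re_pos {w : ℂ} (hw : 0 < w.re) : Complex.sinh w ≠ 0 := by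
  intro h
  rw [Complex.sinh, div_eq_zero_iff, sub_eq_zero] at h
  rcases h with h | h
  · have := congrArg norm h
    rw [Complex.norm_exp, Complex.norm_exp, Real.exp_eq_exp, Complex.neg_re] at this
    linarith
  · norm_num at h

lemma norm_exp_neg_two_mul_lt_one {w : ℂ} (hw : 0 < w.re) : ‖Complex.exp (-(2 * w))‖ < 1 := by
  rw [Complex.norm_exp, Real.exp_lt_one_iff]
  simpa using hw

lemma exp_mul_nat_eq (w : ℂ) (d : ℕ) :
    Complex.exp (-(2 * d * w)) = Complex.exp (-(2 * w)) ^ d := by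
  rw [← Complex.exp_nat_mul]; congr 1; ring

lemma one_sub_exp_eq (w : ℂ) :
    1 - Complex.exp (-(2 * w)) = Complex.exp (-w) * (2 * Complex.sinh w) := by
  have h1 : Complex.exp (-w) * Complex.exp w = 1 := by rw [← Complex.exp_add]; simp
  have h2 : Complex.exp (-(2 * w)) = Complex.exp (-w) * Complex.exp (-w) := by
    rw [← Complex.exp_add]; congr 1; ring
  rw [Complex.sinh, h2]
  linear_combination -h1

lemma hasSum_exp_even {w : ℂ} (hw : 0 < w.re) :
    HasSum (fun d : ℕ => Complex.exp (-(2 * d * w))) (Complex.exp w / (2 * Complex.sinh w)) := by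
  have h := hasSum_geometric_of_norm_lt_one (norm_exp_neg_two_mul_lt_one hw)
  simp only [exp_mul_nat_eq]
  convert! h using 1
  rw [one_sub_exp_eq, mul_inv, ← Complex.exp_neg, neg_neg, div_eq_mul_inv]

lemma summable_norm_exp_even {w : ℂ} (hw : 0 < w.re) :
    Summable (fun d : ℕ => ‖Complex.exp (-(2 * d * w))‖) := by
  simp only [exp_mul_nat_eq, norm_pow]
  exact summable_geometric_of_lt_one (norm_nonneg _) (norm_exp_neg_two_mul_lt_one hw)

lemma exp_odd_eq (w : ℂ) (d : ℕ) :
    Complex.exp (-((2 * d + 1) * w)) = Complex.exp (-w) * Complex.exp (-(2 * d * w)) := by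
  rw [← Complex.exp_add]; congr 1; ring

lemma hasSum_exp_odd {w : ℂ} (hw : 0 < w.re) :
    HasSum (fun d : ℕ => Complex.exp (-((2 * d + 1) * w))) (1 / (2 * Complex.sinh w)) := by
  simp only [exp_odd_eq]
  convert! (hasSum_exp_even hw).mul_left (Complex.exp (-w)) using 1
  rw [← mul_div_assoc, ← Complex.exp_add]; simp

lemma summable_norm_exp_odd {w : ℂ} (hw : 0 < w.re) :
    Summable (fun d : ℕ => ‖Complex.exp (-((2 * d + 1) * w))‖) := by
  simp only [exp_odd_eq, norm_mul]
  exact (summable_norm_exp_even hw).mul_left _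

lemma HasSum.mul_prod {ι κ : Type*} {f : ι → ℂ} {g : κ → ℂ} {x y : ℂ} (hf : HasSum f x)
    (hg : HasSum g y) (hf' : Summable fun i => ‖f i‖) (hg' : Summable fun i => ‖g i‖) :
    HasSum (fun p : ι × κ => f p.1 * g p.2) (x * y) := by
  exact hf.mul hg (summable_mul_of_summable_norm hf' hg')

/-- The two-sided geometric progression equal to `exp(-2rw)` for `r ≥ 0` and `exp(-2|r|w')` for
`r < 0`. -/
noncomputable def twoSidedExp (w w' : ℂ) (r : ℤ) : ℂ :=
  if 0 ≤ r then Complex.exp (-(2 * r * w)) else Complex.exp (2 * r * w')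

/-- The value is `(coth w + coth w') / 2`. -/
lemma hasSum_twoSidedExp {w w' : ℂ} (hw : 0 < w.re) (hw' : 0 < w'.re) :
    HasSum (twoSidedExp w w')
      (Complex.sinh (w + w') / (2 * (Complex.sinh w * Complex.sinh w'))) := by
  have h := HasSum.of_nat_of_neg_add_one (f := twoSidedExp w w')
    (m := Complex.exp w / (2 * Complex.sinh w))
    (m' := Complex.exp (-(2 * w')) * (Complex.exp w' / (2 * Complex.sinh w'))) ?_ ?_
  · convert h using 1
    have e : Complex.exp (-(2 * w')) * Complex.exp w' = Complex.exp (-w') := by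
      rw [← Complex.exp_add]; congr 1; ring
    rw [← mul_div_assoc, e]
    have h1 := sinh_ne_zero_of_re_pos hw
    have h2 := sinh_ne_zero_of_re_pos hw'
    field_simp
    rw [Complex.sinh_add, ← Complex.cosh_add_sinh w, ← Complex.cosh_sub_sinh w']
    ring
  · simpa [twoSidedExp] using hasSum_exp_even hw
  · refine ((hasSum_exp_even hw').mul_left (Complex.exp (-(2 * w')))).congr_fun ?_
    intro d
    rw [twoSidedExp, if_neg (by omega), ← Complex.exp_add]
    congr 1; push_cast; ring

lemma summable_norm_twoSidedExp {w w' : ℂ} (hw : 0 < w.re) (hw' : 0 < w'.re) :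
    Summable fun r => ‖twoSidedExp w w' r‖ := by
  refine Summable.of_nat_of_neg_add_one ?_ ?_
  · simpa [twoSidedExp] using summable_norm_exp_even hw
  · refine ((summable_norm_exp_even hw').mul_left ‖Complex.exp (-(2 * w'))‖).congr ?_
    intro d
    rw [twoSidedExp, if_neg (by omega), ← norm_mul, ← Complex.exp_add]
    congr 2; push_cast; ring

/-! ### Exponential series of the kernels -/

/-- The lattice point `(2P+1)b + 2ria` attached to `p = (P, r)`. -/
noncomputable def node (a b : ℝ) (p : ℕ × ℤ) : ℂ :=
  (2 * p.1 + 1) * b + 2 * p.2 * a * Complex.I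

/-- Parametrization `(d, r) ↦ (d + |r|, r)` of the index pairs `(P, r)` with `|r| ≤ P`. -/
def innerIdx (p : ℕ × ℤ) : ℕ × ℤ := (p.1 + p.2.natAbs, p.2)

lemma node_inner_re (a b : ℝ) (p : ℕ × ℤ) :
    (node a b (innerIdx p)).re = (2 * (p.1 + p.2.natAbs) + 1) * b := by
  simp [node, innerIdx]

lemma node_inner_exp (a b : ℝ) (p : ℕ × ℤ) (s : ℝ) :
    Complex.exp (-node a b (innerIdx p) * s) = Complex.exp (-((2 * p.1 + 1) * (b * s : ℂ))) *
      twoSidedExp ((b + a * Complex.I) * s) ((b - a * Complex.I) * s) p.2 := by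
  obtain ⟨d, r⟩ := p
  rw [twoSidedExp]
  split_ifs with h
  · obtain ⟨m, rfl⟩ := Int.eq_ofNat_of_zero_le h
    rw [← Complex.exp_add]; congr 1
    simp [node, innerIdx]; ring
  · obtain ⟨m, rfl⟩ : ∃ m : ℕ, r = -m := ⟨r.natAbs, by omega⟩
    rw [← Complex.exp_add]; congr 1
    simp [node, innerIdx]; ring

lemma sinh_mul_sinh_conj (x y : ℂ) :
    Complex.sinh (x + y * Complex.I) * Complex.sinh (x - y * Complex.I) =
      Complex.cosh x ^ 2 - Complex.cos y ^ 2 := by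
  rw [Complex.sinh_add, Complex.sinh_sub, Complex.cosh_mul_I, Complex.sinh_mul_I]
  have h1 := Complex.cosh_sq_sub_sinh_sq x
  have h2 := Complex.sin_sq_add_cos_sq y
  linear_combination (-Complex.cos y ^ 2) * h1 + Complex.cosh x ^ 2 * h2
    - (Complex.cosh x ^ 2 * Complex.sin y ^ 2) * Complex.I_sq

lemma hasSum_inner {a b : ℝ} (hb : 0 < b) {s : ℝ} (hs : 0 < s) :
    HasSum (fun p => Complex.exp (-node a b (innerIdx p) * s))
      (Complex.cosh (b * s) / (2 * (Complex.cosh (b * s) ^ 2 - Complex.cos (a * s) ^ 2))) := by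
  have hbs : 0 < b * s := mul_pos hb hs
  have h0 : 0 < (b * s : ℂ).re := by simpa using hbs
  have h1 : 0 < ((b + a * Complex.I) * s).re := by simpa using hbs
  have h2 : 0 < ((b - a * Complex.I) * s).re := by simpa using hbs
  have h := (hasSum_exp_odd h0).mul_prod (hasSum_twoSidedExp h1 h2)
    (summable_norm_exp_odd h0) (summable_norm_twoSidedExp h1 h2)
  simp only [node_inner_exp]
  convert h using 1
  have n0 := sinh_ne_zero_of_re_pos h0
  have n1 := sinh_ne_zero_of_re_pos h1
  have n2 := sinh_ne_zero_of_re_pos h2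
  have e := sinh_mul_sinh_conj (b * s) (a * s)
  rw [show (b * s + a * s * Complex.I : ℂ) = (b + a * Complex.I) * s by ring,
    show (b * s - a * s * Complex.I : ℂ) = (b - a * Complex.I) * s by ring] at e
  rw [← e, show ((b + a * Complex.I) * s + (b - a * Complex.I) * s : ℂ) = 2 * (b * s) by ring,
    Complex.sinh_two_mul]
  field_simp

/-- The exponent `2(P+d+1)a + (2P+1)ib` attached to `p = (P, d)`. It equals
`(2P+1)(a + ib) + (2d+1)a`, so that the exponential series over it factors. -/
noncomputable def outerNode (a b : ℝ) (p : ℕ × ℕ) : ℂ :=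
  2 * (p.1 + p.2 + 1) * a + (2 * p.1 + 1) * b * Complex.I

lemma hasSum_outer {a b : ℝ} (ha : 0 < a) {s : ℝ} (hs : 0 < s) :
    HasSum (fun p => Complex.exp (-outerNode a b p * s))
      (1 / (2 * Complex.sinh ((a + b * Complex.I) * s)) * (1 / (2 * Complex.sinh (a * s)))) := by
  have has : 0 < a * s := mul_pos ha hs
  have h0 : 0 < (a * s : ℂ).re := by simpa using has
  have h1 : 0 < ((a + b * Complex.I) * s).re := by simpa using has
  refine ((hasSum_exp_odd h1).mul_prod (hasSum_exp_odd h0)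
    (summable_norm_exp_odd h1) (summable_norm_exp_odd h0)).congr_fun ?_
  intro p
  rw [← Complex.exp_add, outerNode]; congr 1; ring

/-- The two series with exponents `outerNode a b` and `outerNode a (-b)` add up to the kernel
of the cosine integral. -/
lemma outer_add {a b : ℝ} (ha : 0 < a) {s : ℝ} (hs : 0 < s) :
    1 / (2 * Complex.sinh ((a + b * Complex.I) * s)) * (1 / (2 * Complex.sinh (a * s))) +
    1 / (2 * Complex.sinh ((a + (-b : ℝ) * Complex.I) * s)) * (1 / (2 * Complex.sinh (a * s))) =
      Complex.cos (b * s) / (2 * (Complex.cosh (a * s) ^ 2 - Complex.cos (b * s) ^ 2)) := by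
  have has : 0 < a * s := mul_pos ha hs
  have h0 : 0 < (a * s : ℂ).re := by simpa using has
  have h1 : 0 < (a * s + b * s * Complex.I : ℂ).re := by simpa using has
  have h2 : 0 < (a * s - b * s * Complex.I : ℂ).re := by simpa using has
  have n0 := sinh_ne_zero_of_re_pos h0
  have n1 := sinh_ne_zero_of_re_pos h1
  have n2 := sinh_ne_zero_of_re_pos h2
  rw [← sinh_mul_sinh_conj (a * s) (b * s),
    show ((a + b * Complex.I) * s : ℂ) = a * s + b * s * Complex.I by ring,
    show ((a + (-b : ℝ) * Complex.I) * s : ℂ) = a * s - b * s * Complex.I by push_cast; ring]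
  have key : Complex.sinh (a * s + b * s * Complex.I) + Complex.sinh (a * s - b * s * Complex.I) =
      2 * Complex.sinh (a * s) * Complex.cos (b * s) := by
    rw [Complex.sinh_add, Complex.sinh_sub, Complex.cosh_mul_I]
    ring
  generalize Complex.sinh (a * s + b * s * Complex.I) = u at *
  generalize Complex.sinh (a * s - b * s * Complex.I) = v at *
  generalize Complex.sinh (a * s) = t at *
  generalize Complex.cos (b * s) = x at *
  field_simp
  linear_combination key

/-! ### The sum over the full half lattice -/

/-- Parametrization `(P, d) ↦ (P, ∓(P + d + 1))` of the index pairs `(P, r)` with `|r| > P`. -/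
def outerIdx : (ℕ × ℕ) ⊕ (ℕ × ℕ) → ℕ × ℤ :=
  Sum.elim (fun p => (p.1, -(p.1 + p.2 + 1))) (fun p => (p.1, p.1 + p.2 + 1))

/-- Every `(P, r)` satisfies exactly one of `|r| ≤ P`, `r < -P`, `r > P`. -/
lemma bijective_idx : Function.Bijective (Sum.elim innerIdx outerIdx) := by
  constructor
  · rintro (⟨d, r⟩ | ⟨P, d⟩ | ⟨P, d⟩) (⟨d', r'⟩ | ⟨P', d'⟩ | ⟨P', d'⟩) h <;>
      simp only [Sum.elim_inl, Sum.elim_inr, innerIdx, outerIdx, Prod.mk.injEq] at h <;>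
      obtain ⟨h1, h2⟩ := h <;> simp only [Sum.inl.injEq, Sum.inr.injEq, Prod.mk.injEq, reduceCtorEq] <;>
      omega
  · rintro ⟨P, r⟩
    by_cases h : r.natAbs ≤ P
    · exact ⟨Sum.inl (P - r.natAbs, r), by simp [innerIdx]; omega⟩
    · by_cases h' : r ≤ 0
      · exact ⟨Sum.inr (Sum.inl (P, r.natAbs - P - 1)), by simp [outerIdx]; omega⟩
      · exact ⟨Sum.inr (Sum.inr (P, r.natAbs - P - 1)), by simp [outerIdx]; omega⟩

/-- The exponents of the cosine kernel: `outerNode a b` and its conjugate `outerNode a (-b)`. The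
signs are matched with `outerIdx`, see `outerNodes_pow`. -/
noncomputable def outerNodes (a b : ℝ) : (ℕ × ℕ) ⊕ (ℕ × ℕ) → ℂ :=
  Sum.elim (outerNode a b) (outerNode a (-b))

/-- The exponents of the cosine kernel are `± i` times lattice points, whence the sign. -/
lemma outerNodes_pow (a b : ℝ) (n : ℕ) (i) :
    outerNodes a b i ^ (2 * n + 4) = (-1) ^ n * node a b (outerIdx i) ^ (2 * n + 4) := by
  have hI : Complex.I ^ (2 * n + 4) = (-1) ^ n := by
    rw [pow_add, pow_mul, Complex.I_sq, Complex.I_pow_four, mul_one]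
  rw [← hI, ← mul_pow]
  rcases i with ⟨P, d⟩ | ⟨P, d⟩
  · congr 1
    simp only [outerNodes, outerNode, node, outerIdx, Sum.elim_inl]
    push_cast
    linear_combination (2 * ((P : ℂ) + d + 1) * a) * Complex.I_sq
  · rw [← Even.neg_pow (n := 2 * n + 4) ⟨n + 2, by ring⟩ (Complex.I * _)]
    congr 1
    simp only [outerNodes, outerNode, node, outerIdx, Sum.elim_inr]
    push_cast
    linear_combination (2 * ((P : ℂ) + d + 1) * a) * Complex.I_sq

lemma hasSum_outerNodes {a b : ℝ} (ha : 0 < a) {s : ℝ} (hs : 0 < s) :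
    HasSum (fun i => Complex.exp (-outerNodes a b i * s))
      (Complex.cos (b * s) / (2 * (Complex.cosh (a * s) ^ 2 - Complex.cos (b * s) ^ 2))) := by
  rw [← outer_add ha hs]
  exact HasSum.sum (hasSum_outer ha hs) (hasSum_outer ha hs)

lemma summable_aux_nat (n : ℕ) : Summable fun d : ℕ => 1 / ((d : ℝ) + 1) ^ (n + 2) := by
  have h := (summable_nat_add_iff 1).2 (Real.summable_one_div_nat_pow (p := n + 2).2 (by omega))
  simpa using h

lemma summable_aux_int (n : ℕ) : Summable fun r : ℤ => 1 / ((r.natAbs : ℝ) + 1) ^ (n + 2) := by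
  refine Summable.of_nat_of_neg ?_ ?_ <;> simpa using summable_aux_nat n

/-- Comparison of `t ^ (-(2n+4))` with a product of two summable sequences, from
`(x + 1)(y + 1) ≤ (x + y + 1)²`. -/
lemma pow_bound (n : ℕ) {x y c t : ℝ} (hx : 0 ≤ x) (hy : 0 ≤ y) (hc : 0 < c)
    (ht : (x + y + 1) * c ≤ t) :
    1 / t ^ (2 * n + 3 + 1) ≤
      1 / c ^ (2 * n + 4) * (1 / (x + 1) ^ (n + 2) * (1 / (y + 1) ^ (n + 2))) := by
  have h1 : (x + 1) * (y + 1) ≤ (x + y + 1) ^ 2 := by nlinarith [mul_nonneg hx hy]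
  have h2 : c ^ (2 * n + 4) * ((x + 1) ^ (n + 2) * (y + 1) ^ (n + 2)) ≤ t ^ (2 * n + 3 + 1) := by
    calc c ^ (2 * n + 4) * ((x + 1) ^ (n + 2) * (y + 1) ^ (n + 2))
        = c ^ (2 * n + 4) * ((x + 1) * (y + 1)) ^ (n + 2) := by rw [mul_pow]
      _ ≤ c ^ (2 * n + 4) * ((x + y + 1) ^ 2) ^ (n + 2) := by gcongr
      _ = ((x + y + 1) * c) ^ (2 * n + 3 + 1) := by
        rw [← pow_mul, mul_pow, mul_comm]; congr 2
      _ ≤ _ := by gcongr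
  rw [one_div_mul_one_div, one_div_mul_one_div]
  exact one_div_le_one_div_of_le (by positivity) h2

lemma hasSum_inner_integral (n : ℕ) {a b : ℝ} (hb : 0 < b) :
    HasSum (fun p => ((2 * n + 3).factorial : ℂ) / node a b (innerIdx p) ^ (2 * n + 3 + 1))
      (∫ s in Set.Ioi (0 : ℝ), (s : ℂ) ^ (2 * n + 3) *
        (Complex.cosh (b * s) / (2 * (Complex.cosh (b * s) ^ 2 - Complex.cos (a * s) ^ 2)))) := by
  refine hasSum_integral_exp _ (fun p => node a b (innerIdx p)) (fun p => ?_) ?_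
    (fun s hs => hasSum_inner hb hs)
  · rw [node_inner_re]; positivity
  · refine Summable.of_nonneg_of_le (fun p => ?_) (fun p => ?_)
      (((summable_aux_nat n).mul_of_nonneg (summable_aux_int n) (fun _ => by positivity)
        (fun _ => by positivity)).mul_left (1 / b ^ (2 * n + 4)))
    · rw [node_inner_re]; positivity
    · rw [node_inner_re]
      exact pow_bound n (by positivity) (by positivity) hb (by gcongr; linarith [
        (by positivity : (0 : ℝ) ≤ p.1), (by positivity : (0 : ℝ) ≤ p.2.natAbs)])

lemma outerNode_re (a b : ℝ) (p : ℕ × ℕ) : (outerNode a b p).re = 2 * (p.1 + p.2 + 1) * a := by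
  simp [outerNode]

lemma summable_outerNode (n : ℕ) {a : ℝ} (b : ℝ) (ha : 0 < a) :
    Summable fun p => 1 / (outerNode a b p).re ^ (2 * n + 3 + 1) := by
  refine Summable.of_nonneg_of_le (fun p => ?_) (fun p => ?_)
    (((summable_aux_nat n).mul_of_nonneg (summable_aux_nat n) (fun _ => by positivity)
      (fun _ => by positivity)).mul_left (1 / a ^ (2 * n + 4)))
  · rw [outerNode_re]; positivity
  · rw [outerNode_re]
    exact pow_bound n (by positivity) (by positivity) ha (by gcongr; linarith [
        (by positivity : (0 : ℝ) ≤ p.1), (by positivity : (0 : ℝ) ≤ p.2)])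

lemma hasSum_outer_integral (n : ℕ) {a b : ℝ} (ha : 0 < a) :
    HasSum (fun i => ((2 * n + 3).factorial : ℂ) / outerNodes a b i ^ (2 * n + 3 + 1))
      (∫ s in Set.Ioi (0 : ℝ), (s : ℂ) ^ (2 * n + 3) *
        (Complex.cos (b * s) / (2 * (Complex.cosh (a * s) ^ 2 - Complex.cos (b * s) ^ 2)))) := by
  refine hasSum_integral_exp _ (outerNodes a b) (fun p => ?_) ?_
    (fun s hs => hasSum_outerNodes ha hs)
  · rcases p with p | p <;> simp only [outerNodes, Sum.elim_inl, Sum.elim_inr, outerNode_re] <;>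
      positivity
  · exact Summable.sum _ (summable_outerNode n b ha) (summable_outerNode n (-b) ha)

lemma hasSum_node (n : ℕ) {a b : ℝ} (ha : 0 < a) (hb : 0 < b) :
    HasSum (fun p => ((2 * n + 3).factorial : ℂ) / node a b p ^ (2 * n + 3 + 1))
      ((∫ s in Set.Ioi (0 : ℝ), (s : ℂ) ^ (2 * n + 3) *
        (Complex.cosh (b * s) / (2 * (Complex.cosh (b * s) ^ 2 - Complex.cos (a * s) ^ 2)))) +
      (-1) ^ n * ∫ s in Set.Ioi (0 : ℝ), (s : ℂ) ^ (2 * n + 3) *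
        (Complex.cos (b * s) / (2 * (Complex.cosh (a * s) ^ 2 - Complex.cos (b * s) ^ 2)))) := by
  rw [← (Equiv.ofBijective _ bijective_idx).hasSum_iff]
  refine HasSum.sum (hasSum_inner_integral n hb) ?_
  refine ((hasSum_outer_integral (b := b) n ha).mul_left ((-1) ^ n)).congr_fun ?_
  intro i
  have h := outerNodes_pow a b n i
  simp only [Function.comp, Equiv.ofBijective_apply, Sum.elim_inr]
  rw [h, ← mul_div_assoc, mul_div_mul_left _ _ (pow_ne_zero n (by norm_num))]

/-! ### Evaluation by the Lipschitz formula -/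

/-- The Lipschitz formula at the point `z = i(2P+1)b/(2a)`, after `r ↦ -r`: then
`(2P+1)b - 2ria = -2ia (z + r)`. -/
lemma tsum_int_node (n : ℕ) {a b : ℝ} (ha : 0 < a) (hb : 0 < b) (P : ℕ) :
    ∑' r : ℤ, ((2 * n + 3).factorial : ℂ) / node a b (P, r) ^ (2 * n + 3 + 1) =
      ((π / a) ^ (2 * n + 4) * ∑' m : ℕ, ((m : ℝ) + 1) ^ (2 * n + 3) *
        Real.exp (-(π * b / a)) ^ ((2 * P + 1) * (m + 1)) : ℝ) := by
  have ha' : (a : ℂ) ≠ 0 := by exact_mod_cast ha.ne'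
  set y : ℝ := (2 * P + 1) * b / (2 * a) with hy
  have hy0 : 0 < y := by positivity
  let z : UpperHalfPlane := ⟨y * Complex.I, by simpa using hy0⟩
  have hz : (z : ℂ) = y * Complex.I := rfl
  have h := EisensteinSeries.qExpansion_identity (k := 2 * n + 3) (by omega) z
  have hq : Complex.exp (2 * π * Complex.I * z) =
      ((Real.exp (-(π * b / a)) ^ (2 * P + 1) : ℝ) : ℂ) := by
    rw [← Real.exp_nat_mul, Complex.ofReal_exp, hz]
    congr 1
    rw [hy]
    push_cast
    field_simp
    linear_combination ((b : ℂ) * (2 * P + 1)) * Complex.I_sq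
  have hnode (r : ℤ) : node a b (P, -r) = (-2 * a * Complex.I) * (z + r) := by
    rw [hz, hy, node]
    push_cast
    field_simp
    linear_combination ((2 * (P : ℂ) + 1) * b) * Complex.I_sq
  rw [← (Equiv.neg ℤ).tsum_eq]
  simp only [Equiv.neg_apply, hnode, mul_pow (-2 * (a : ℂ) * Complex.I)]
  have e (r : ℤ) : ((2 * n + 3).factorial : ℂ) / ((-2 * (a : ℂ) * Complex.I) ^ (2 * n + 3 + 1) *
      ((z : ℂ) + r) ^ (2 * n + 3 + 1)) =
      ((2 * n + 3).factorial / (-2 * (a : ℂ) * Complex.I) ^ (2 * n + 3 + 1)) *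
      (1 / ((z : ℂ) + r) ^ (2 * n + 3 + 1)) := by
    rw [mul_one_div, div_div]
  simp only [e]
  rw [tsum_mul_left, h, hq]
  have hs : Summable fun m : ℕ => (m : ℝ) ^ (2 * n + 3) *
      (Real.exp (-(π * b / a)) ^ (2 * P + 1)) ^ m := by
    refine summable_pow_mul_geometric_of_norm_lt_one _ ?_
    rw [Real.norm_of_nonneg (by positivity)]
    exact pow_lt_one₀ (by positivity) (Real.exp_lt_one_iff.2 (by
      have : 0 < π * b / a := by positivity
      linarith)) (by omega)
  have hc : ∑' m : ℕ, (m : ℂ) ^ (2 * n + 3) *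
      ((Real.exp (-(π * b / a)) ^ (2 * P + 1) : ℝ) : ℂ) ^ m =
      ((∑' m : ℕ, (m : ℝ) ^ (2 * n + 3) * (Real.exp (-(π * b / a)) ^ (2 * P + 1)) ^ m : ℝ) : ℂ) := by
    rw [Complex.ofReal_tsum]; push_cast; rfl
  rw [hc, hs.tsum_eq_zero_add, ← mul_assoc, Complex.ofReal_mul]
  congr 1
  · have hf : ((2 * n + 3).factorial : ℂ) ≠ 0 := by exact_mod_cast Nat.factorial_ne_zero _
    rw [div_mul_div_comm, mul_comm, mul_div_mul_right _ _ hf, ← div_pow]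
    push_cast
    congr 1
    field_simp
  · congr 1
    simp only [← pow_mul]
    simp

lemma tsum_node (n : ℕ) {a b : ℝ} (ha : 0 < a) (hb : 0 < b) :
    ∑' p, ((2 * n + 3).factorial : ℂ) / node a b p ^ (2 * n + 3 + 1) =
      ((π / a) ^ (2 * n + 4) * ∑' m : ℕ, ((m : ℝ) + 1) ^ (2 * n + 3) *
        Real.exp (-(π * b / a)) ^ (m + 1) / (1 - Real.exp (-(π * b / a)) ^ (2 * (m + 1))) : ℝ) := by
  rw [(hasSum_node n ha hb).summable.tsum_prod]
  simp only [tsum_int_node n ha hb]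
  rw [← Complex.ofReal_tsum, tsum_mul_left]
  congr 2
  set q := Real.exp (-(π * b / a)) with hq
  have q0 : 0 < q := Real.exp_pos _
  have q1 : q < 1 := Real.exp_lt_one_iff.2 (by
      have : 0 < π * b / a := by positivity
      linarith)
  have hsum : Summable (Function.uncurry fun (P m : ℕ) =>
      ((m : ℝ) + 1) ^ (2 * n + 3) * q ^ ((2 * P + 1) * (m + 1))) := by
    have hs : Summable fun m : ℕ => ((m : ℝ) + 1) ^ (2 * n + 3) * q ^ (m + 1) := by
      have := (summable_nat_add_iff 1).2 (summable_pow_mul_geometric_of_norm_lt_one (2 * n + 3)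
        (r := q) (by rwa [Real.norm_of_nonneg q0.le]))
      simpa using this
    refine Summable.of_nonneg_of_le (fun p => ?_) (fun p => ?_)
      ((summable_geometric_of_lt_one q0.le q1).mul_of_nonneg hs (fun _ => by positivity)
        (fun _ => by positivity))
    · simp only [Function.uncurry]; positivity
    · simp only [Function.uncurry]
      rw [mul_left_comm, ← pow_add]
      gcongr 1
      -- the exponents satisfy `P + (m + 1) ≤ (2P + 1)(m + 1)`
      exact pow_le_pow_of_le_one q0.le q1.le (by nlinarith [Nat.zero_le (p.1 * p.2)])
  refine hsum.tsum_comm.symm.trans (tsum_congr fun m => ?_)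
  rw [tsum_mul_left, mul_div_assoc]
  congr 1
  have e (P : ℕ) : q ^ ((2 * P + 1) * (m + 1)) = q ^ (m + 1) * (q ^ (2 * (m + 1))) ^ P := by
    rw [← pow_mul, ← pow_add]; congr 1; ring
  simp only [e]
  rw [tsum_mul_left, tsum_geometric_of_lt_one (by positivity)
    (pow_lt_one₀ q0.le q1 (by omega)), div_eq_mul_inv]

/-! ### Reduction of the moment integrals -/

lemma integral_eq_comp_sq (f : ℝ → ℝ) :
    ∫ x in Set.Ioi (0 : ℝ), f x = ∫ s in Set.Ioi (0 : ℝ), 2 * s * f (s ^ 2) := by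
  rw [← integral_comp_rpow_Ioi_of_pos (g := f) (p := 2) two_pos]
  refine setIntegral_congr_fun measurableSet_Ioi fun s _ => ?_
  norm_num

lemma integral_pow_div_sqrt (n : ℕ) (g : ℝ → ℝ) :
    ∫ x in Set.Ioi (0 : ℝ), x ^ (n + 1) / g (Real.sqrt x) =
      ∫ s in Set.Ioi (0 : ℝ), 2 * (s ^ (2 * n + 3) / g s) := by
  rw [integral_eq_comp_sq]
  refine setIntegral_congr_fun measurableSet_Ioi fun s hs => ?_
  simp only [Real.sqrt_sq (Set.mem_Ioi.1 hs).le]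
  ring

/-- A lower bound that has the right order of vanishing at `0` and grows exponentially. -/
lemma cosh_sub_one_ge {y : ℝ} (hy : 0 ≤ y) : y ^ 2 * Real.exp (y / 2) / 8 ≤ Real.cosh y - 1 := by
  have h1 : Real.cosh y - 1 = 2 * Real.sinh (y / 2) ^ 2 := by
    have := Real.cosh_two_mul (y / 2)
    rw [Real.cosh_sq] at this
    rw [show y = 2 * (y / 2) by ring, this]
    ring_nf
  have h2 : Real.sinh (y / 2) = 2 * Real.sinh (y / 4) * Real.cosh (y / 4) := by
    rw [← Real.sinh_two_mul]; congr 1; ring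
  have h3 : y / 4 ≤ Real.sinh (y / 4) := Real.self_le_sinh_iff.2 (by positivity)
  have h4 : Real.exp (y / 4) / 2 ≤ Real.cosh (y / 4) := by
    rw [Real.cosh_eq]; linarith [Real.exp_pos (-(y / 4))]
  have h5 : y / 4 * Real.exp (y / 4) ≤ Real.sinh (y / 2) := by
    rw [h2]
    calc y / 4 * Real.exp (y / 4) = 2 * (y / 4) * (Real.exp (y / 4) / 2) := by ring
      _ ≤ _ := by gcongr
  have h6 : Real.exp (y / 2) = Real.exp (y / 4) ^ 2 := by
    rw [← Real.exp_nat_mul]; congr 1; push_cast; ring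
  rw [h1, h6]
  calc y ^ 2 * Real.exp (y / 4) ^ 2 / 8 = 2 * (y / 4 * Real.exp (y / 4)) ^ 2 := by ring
    _ ≤ _ := by gcongr

lemma integrableOn_pow_div (n : ℕ) {b : ℝ} (hb : 0 < b) {g : ℝ → ℝ} (hg : Continuous g)
    (hle : ∀ s, Real.cosh (b * s) - 1 ≤ g s) :
    IntegrableOn (fun s => s ^ (2 * n + 3) / g s) (Set.Ioi 0) := by
  refine ((integrableOn_pow_mul_exp_neg (2 * n + 1) (half_pos hb)).const_mul (8 / b ^ 2)).mono' ?_ ?_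
  · exact (Measurable.div (by fun_prop) hg.measurable).aestronglyMeasurable
  · filter_upwards [ae_restrict_mem measurableSet_Ioi] with s hs
    have hs : 0 < s := hs
    have h1 := (cosh_sub_one_ge (mul_pos hb hs).le).trans (hle s)
    have h2 : 0 < (b * s) ^ 2 * Real.exp (b * s / 2) / 8 := by positivity
    rw [Real.norm_of_nonneg (div_nonneg (by positivity) (h2.trans_le h1).le)]
    calc s ^ (2 * n + 3) / g s ≤ s ^ (2 * n + 3) / ((b * s) ^ 2 * Real.exp (b * s / 2) / 8) := by
          gcongr
      _ = _ := by
        rw [show -(b / 2) * s = -(b * s / 2) by ring, Real.exp_neg]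
        field_simp
        ring

lemma cosh_sub_add_cos_pos {x : ℝ} (hx : 0 < x) (y : ℝ) :
    0 < Real.cosh x - Real.cos y ∧ 0 < Real.cosh x + Real.cos y := by
  have h := Real.one_lt_cosh.2 hx.ne'
  constructor <;> linarith [Real.cos_le_one y, Real.neg_one_le_cos y]

lemma integral_cosh_part (n : ℕ) {a b : ℝ} (hb : 0 < b) :
    (∫ s in Set.Ioi (0 : ℝ), 2 * (s ^ (2 * n + 3) / (Real.cos (a * s) + Real.cosh (b * s)))) -
      (∫ s in Set.Ioi (0 : ℝ), 2 * (s ^ (2 * n + 3) / (Real.cos (a * s) - Real.cosh (b * s)))) =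
    8 * ∫ s in Set.Ioi (0 : ℝ), s ^ (2 * n + 3) *
      (Real.cosh (b * s) / (2 * (Real.cosh (b * s) ^ 2 - Real.cos (a * s) ^ 2))) := by
  have i1 := integrableOn_pow_div n hb (g := fun s => Real.cos (a * s) + Real.cosh (b * s))
    (by fun_prop) (fun s => by linarith [Real.neg_one_le_cos (a * s)])
  have i2 := (integrableOn_pow_div n hb (g := fun s => Real.cosh (b * s) - Real.cos (a * s))
    (by fun_prop) (fun s => by linarith [Real.cos_le_one (a * s)])).neg
  have i2' : IntegrableOn (fun s => s ^ (2 * n + 3) / (Real.cos (a * s) - Real.cosh (b * s)))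
      (Set.Ioi 0) := by
    refine i2.congr_fun (fun s _ => ?_) measurableSet_Ioi
    simp only [Pi.neg_apply]
    rw [← div_neg, neg_sub]
  rw [← integral_sub (i1.const_mul 2) (i2'.const_mul 2), ← integral_const_mul]
  refine setIntegral_congr_fun measurableSet_Ioi fun s hs => ?_
  obtain ⟨h1, h2⟩ := cosh_sub_add_cos_pos (mul_pos hb hs) (a * s)
  have h3 : Real.cos (a * s) - Real.cosh (b * s) ≠ 0 := by linarith
  have h4 : Real.cosh (b * s) ^ 2 - Real.cos (a * s) ^ 2 ≠ 0 := by
    rw [sq_sub_sq]; positivity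
  have h5 : Real.cos (a * s) + Real.cosh (b * s) ≠ 0 := by linarith
  generalize Real.cos (a * s) = x at *
  generalize Real.cosh (b * s) = y at *
  field_simp
  ring

lemma integral_cos_part (n : ℕ) {a b : ℝ} (ha : 0 < a) :
    (∫ s in Set.Ioi (0 : ℝ), 2 * (s ^ (2 * n + 3) / (Real.cosh (a * s) - Real.cos (b * s)))) -
      (∫ s in Set.Ioi (0 : ℝ), 2 * (s ^ (2 * n + 3) / (Real.cosh (a * s) + Real.cos (b * s)))) =
    8 * ∫ s in Set.Ioi (0 : ℝ), s ^ (2 * n + 3) *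
      (Real.cos (b * s) / (2 * (Real.cosh (a * s) ^ 2 - Real.cos (b * s) ^ 2))) := by
  have i1 := integrableOn_pow_div n ha (g := fun s => Real.cosh (a * s) + Real.cos (b * s))
    (by fun_prop) (fun s => by linarith [Real.neg_one_le_cos (b * s)])
  have i2 := integrableOn_pow_div n ha (g := fun s => Real.cosh (a * s) - Real.cos (b * s))
    (by fun_prop) (fun s => by linarith [Real.cos_le_one (b * s)])
  rw [← integral_sub (i2.const_mul 2) (i1.const_mul 2), ← integral_const_mul]
  refine setIntegral_congr_fun measurableSet_Ioi fun s hs => ?_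
  obtain ⟨h1, h2⟩ := cosh_sub_add_cos_pos (mul_pos ha hs) (b * s)
  have h4 : Real.cosh (a * s) ^ 2 - Real.cos (b * s) ^ 2 ≠ 0 := by
    rw [sq_sub_sq]; positivity
  generalize Real.cos (b * s) = x at *
  generalize Real.cosh (a * s) = y at *
  field_simp
  ring

lemma real_identity (n : ℕ) {a b : ℝ} (ha : 0 < a) (hb : 0 < b) :
    (∫ s in Set.Ioi (0 : ℝ), s ^ (2 * n + 3) *
      (Real.cosh (b * s) / (2 * (Real.cosh (b * s) ^ 2 - Real.cos (a * s) ^ 2)))) +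
    (-1) ^ n * (∫ s in Set.Ioi (0 : ℝ), s ^ (2 * n + 3) *
      (Real.cos (b * s) / (2 * (Real.cosh (a * s) ^ 2 - Real.cos (b * s) ^ 2)))) =
    (π / a) ^ (2 * n + 4) * ∑' m : ℕ, ((m : ℝ) + 1) ^ (2 * n + 3) *
        Real.exp (-(π * b / a)) ^ (m + 1) / (1 - Real.exp (-(π * b / a)) ^ (2 * (m + 1))) := by
  have h := (hasSum_node n ha hb).tsum_eq
  rw [tsum_node n ha hb] at h
  rw [← Complex.ofReal_inj, h, Complex.ofReal_add, Complex.ofReal_mul, ← integral_complex_ofReal,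
    ← integral_complex_ofReal]
  push_cast
  rfl

/-! ### Conclusion -/

lemma ellipticK_pos {k : ℝ} (hk : k ∈ Set.Ioo (0 : ℝ) 1) : 0 < ellipticK k := by
  have hpos (θ : ℝ) : 0 < 1 - k ^ 2 * Real.sin θ ^ 2 := by
    have h1 : k ^ 2 < 1 := by nlinarith [hk.1, hk.2]
    nlinarith [Real.sin_sq_le_one θ, sq_nonneg k, sq_nonneg (Real.sin θ)]
  refine intervalIntegral.intervalIntegral_pos_of_pos ?_ (fun θ => Real.rpow_pos_of_pos (hpos θ) _)
    (by positivity)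
  refine Continuous.intervalIntegrable ?_ _ _
  exact Continuous.rpow_const (by fun_prop) fun θ => Or.inl (hpos θ).ne'

theorem two_Iplus_sub_Iminus (k : ℝ) (hk : k ∈ Set.Ioo (0 : ℝ) 1) (n : ℕ) :
    2 * Iplus k (n + 1) - Iminus k n =
      8 * (π / ellipticK k) ^ (2 * n + 4) *
        ∑' m : ℕ, ((m : ℝ) + 1) ^ (2 * n + 3) *
          Real.exp (-(π * ellipticK (Real.sqrt (1 - k ^ 2)) / ellipticK k)) ^ (m + 1) /
            (1 - Real.exp (-(π * ellipticK (Real.sqrt (1 - k ^ 2)) / ellipticK k)) ^ (2 * (m + 1))) := by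
  have ha := ellipticK_pos hk
  have hb : 0 < ellipticK (Real.sqrt (1 - k ^ 2)) := by
    have h1 : 0 < k ^ 2 := pow_pos hk.1 2
    have h2 : k ^ 2 < 1 := by nlinarith [hk.1, hk.2]
    refine ellipticK_pos ⟨Real.sqrt_pos.2 (by linarith), ?_⟩
    rw [Real.sqrt_lt' one_pos]; linarith
  unfold Iplus Iminus
  generalize ellipticK (Real.sqrt (1 - k ^ 2)) = b at *
  generalize ellipticK k = a at *
  rw [mul_assoc, ← real_identity n ha hb, mul_add (8 : ℝ), mul_left_comm 8, ← integral_cosh_part n hb,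
    ← integral_cos_part n ha,
    integral_pow_div_sqrt n (fun s => Real.cos (a * s) + Real.cosh (b * s)),
    integral_pow_div_sqrt n (fun s => Real.cosh (a * s) + Real.cos (b * s)),
    integral_pow_div_sqrt n (fun s => Real.cos (a * s) - Real.cosh (b * s)),
    integral_pow_div_sqrt n (fun s => Real.cosh (a * s) - Real.cos (b * s)), pow_succ (-1 : ℝ) n]
  ring
end

section
/- Let k ∈ (0,1). Then I_0^− = −4, I_1^− = 32(1−2k²), and for every n ∈ ℕ the recurrence I_{n+2}^− = −8(1−2k²) I_{n+1}^− − 3 Σ_{j=0}^{n} C(2n+4, 2j+2) I_j^− I_{n−j}^− holds, where C(a,b) denotes the binomial coefficient. -/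
/-!
The integrals are Taylor coefficients of a Weierstrass function. Let `L` be the lattice generated by
`K' ± i K` (`rhombic`). After the substitution `x = t²`, the kernel `1 / (cosh pt - cos qt)` is expanded
as a double geometric series in `exp (-(p ± i q) t)` and integrated term by term (`moment_eq_tsum`). The
two integrals in `I_n^-` become the sums of `w ^ (-(2n + 4))` over the two pairs of opposite quadrants
of `L - K'`, so that (`moments_eq_sumInvPow`)
`I_n^- = -2 (2n + 3)! ∑_{l ∈ L} (l - K') ^ (-(2n + 4)) = -2 ℘^{(2n + 2)}(K')`.

The second ingredient is the value of the invariants (`rhombic_invariants`):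
`℘(K') = e = -(2/3) (1 - 2k²)` and `g₂ = 12 e² - 4`. On the real and imaginary axes `℘` is a real
function running monotonically from the pole to the common half-period value `℘(K') = ℘(i K)`.
Quadrature along each axis expresses the half periods as
`√ρ K' = K(√(1 - μ))` and `√ρ K = K(√μ)` for some `μ ∈ (0, 1)` and `ρ > 0` that determine `e` and
`g₂` (`axes_periods`); strict monotonicity of the complete elliptic integral forces `μ = k²` and `ρ = 1`
(`modulus_unique`).

Since `℘'' = 6 ℘² - g₂ / 2`, the function `G = -2 (℘ - e)` satisfies `G'' = -4 - 8 (1 - 2k²) G - 3 G²`,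
vanishes at `K'` and is even about `K'`. Differentiating `2n + 4` times with Leibniz' rule gives the
recurrence, and orders `0` and `2` give the initial values (`iteratedDeriv_recurrence`).
-/

open MeasureTheory Real

/-! ### Real solutions of `f'' = 6 f² - γ` -/

/-- Local uniqueness for the second order equation `f'' = 6 f² - γ`, written as a first order system
with `p = f'`. -/
lemma ode_unique {γ a b t₀ : ℝ} (ht₀ : t₀ ∈ Set.Ioo a b) {f p g q : ℝ → ℝ}
    (hf : ∀ t ∈ Set.Ioo a b, HasDerivAt f (p t) t)
    (hp : ∀ t ∈ Set.Ioo a b, HasDerivAt p (6 * f t ^ 2 - γ) t)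
    (hg : ∀ t ∈ Set.Ioo a b, HasDerivAt g (q t) t)
    (hq : ∀ t ∈ Set.Ioo a b, HasDerivAt q (6 * g t ^ 2 - γ) t)
    (h0 : f t₀ = g t₀) (h1 : p t₀ = q t₀) : Set.EqOn f g (Set.Ioo a b) := by
  intro t ht
  obtain ⟨a', ha', ha''⟩ := exists_between (lt_min ht.1 ht₀.1)
  obtain ⟨b', hb', hb''⟩ := exists_between (max_lt ht.2 ht₀.2)
  rw [lt_min_iff] at ha''
  rw [max_lt_iff] at hb'
  have hsub : Set.Icc a' b' ⊆ Set.Ioo a b := Set.Icc_subset_Ioo ha' hb''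
  have hsub' : Set.Ioo a' b' ⊆ Set.Ioo a b := Set.Ioo_subset_Icc_self.trans hsub
  let v : ℝ × ℝ → ℝ × ℝ := fun z => (z.2, 6 * z.1 ^ 2 - γ)
  have hF : ∀ t ∈ Set.Ioo a b, HasDerivAt (fun t => (f t, p t)) (v (f t, p t)) t :=
    fun t ht => (hf t ht).prodMk (hp t ht)
  have hG : ∀ t ∈ Set.Ioo a b, HasDerivAt (fun t => (g t, q t)) (v (g t, q t)) t :=
    fun t ht => (hg t ht).prodMk (hq t ht)
  have cF : ContinuousOn (fun t => (f t, p t)) (Set.Icc a' b') :=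
    fun t ht => (hF t (hsub ht)).continuousAt.continuousWithinAt
  have cG : ContinuousOn (fun t => (g t, q t)) (Set.Icc a' b') :=
    fun t ht => (hG t (hsub ht)).continuousAt.continuousWithinAt
  obtain ⟨C, hC⟩ := isCompact_Icc.exists_bound_of_continuousOn cF
  obtain ⟨D, hD⟩ := isCompact_Icc.exists_bound_of_continuousOn cG
  have hv : ContDiff ℝ 1 v := by fun_prop
  obtain ⟨K, hK⟩ := (hv.contDiffOn (s := Metric.closedBall (0 : ℝ × ℝ) (max C D))).exists_lipschitzOnWith
    one_ne_zero (convex_closedBall _ _) (isCompact_closedBall _ _)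
  have := ODE_solution_unique_of_mem_Icc (v := fun _ => v) (K := K)
    (s := fun _ => Metric.closedBall (0 : ℝ × ℝ) (max C D)) (t₀ := t₀) (fun _ _ => hK) ⟨ha''.2, hb'.2⟩ cF
    (fun t ht => hF t (hsub' ht))
    (fun t ht => by
      simpa using Or.inl (hC t (Set.Ioo_subset_Icc_self ht)))
    cG (fun t ht => hG t (hsub' ht))
    (fun t ht => by
      simpa using Or.inr (hD t (Set.Ioo_subset_Icc_self ht))) (by simp [h0, h1])
  exact congrArg Prod.fst (this ⟨ha''.1.le, hb'.1.le⟩)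

/-- A solution of `f'' = 6 f² - γ` on `(0, 2a)` that tends to `+∞` at `0` has no critical point in
`(0, a)`: it would be symmetric about such a point `x`, hence finite at `0` because it is finite at
`2x`. A critical point at `a` is not an equilibrium, since the solution would be constant. -/
lemma deriv_neg_of_blowup {γ a : ℝ} (ha : 0 < a) {f p : ℝ → ℝ}
    (hf : ∀ t ∈ Set.Ioo 0 (2 * a), HasDerivAt f (p t) t)
    (hp : ∀ t ∈ Set.Ioo 0 (2 * a), HasDerivAt p (6 * f t ^ 2 - γ) t)
    (hlim : Filter.Tendsto f (nhdsWithin 0 (Set.Ioi 0)) Filter.atTop) (hpa : p a = 0) :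
    (∀ t ∈ Set.Ioo 0 a, p t < 0) ∧ 6 * f a ^ 2 - γ ≠ 0 := by
  have hne : ∀ t ∈ Set.Ioo 0 a, p t ≠ 0 := by
    intro x hx hpx
    have hsub : Set.Ioo 0 (2 * x) ⊆ Set.Ioo 0 (2 * a) :=
      Set.Ioo_subset_Ioo_right (by linarith [hx.2])
    have href : ∀ t ∈ Set.Ioo 0 (2 * x), 2 * x - t ∈ Set.Ioo 0 (2 * a) := fun t ht =>
      ⟨by linarith [ht.2], by linarith [ht.1, hx.2]⟩
    have hd : ∀ t, HasDerivAt (fun t => 2 * x - t) (-1) t := fun t => by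
      simpa using (hasDerivAt_id t).const_sub (2 * x)
    have key : Set.EqOn f (fun t => f (2 * x - t)) (Set.Ioo 0 (2 * x)) := by
      refine ode_unique (γ := γ) (p := p) (q := fun t => - p (2 * x - t)) (t₀ := x)
        ⟨hx.1, by linarith [hx.1]⟩ (fun t ht => hf t (hsub ht)) (fun t ht => hp t (hsub ht))
        ?_ ?_ (by ring_nf) ?_
      · intro t ht
        exact ((hf _ (href t ht)).comp t (hd t)).congr_deriv (by ring)
      · intro t ht
        exact ((hp _ (href t ht)).comp t (hd t)).neg.congr_deriv (by ring)
      · have : 2 * x - x = x := by ring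
        simp [this, hpx]
    have h2x : (2 * x) ∈ Set.Ioo 0 (2 * a) := ⟨by linarith [hx.1], by linarith [hx.2]⟩
    have hcont : Filter.Tendsto (fun t => f (2 * x - t)) (nhdsWithin 0 (Set.Ioi 0))
        (nhds (f (2 * x))) := by
      have h1 : Filter.Tendsto (fun t => 2 * x - t) (nhdsWithin 0 (Set.Ioi 0)) (nhds (2 * x)) := by
        have : Filter.Tendsto (fun t => 2 * x - t) (nhds 0) (nhds (2 * x - 0)) :=
          (hd 0).continuousAt
        simpa using this.mono_left nhdsWithin_le_nhds
      exact ((hf _ h2x).continuousAt.tendsto).comp h1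
    have hev : f =ᶠ[nhdsWithin 0 (Set.Ioi 0)] (fun t => f (2 * x - t)) := by
      filter_upwards [Ioo_mem_nhdsGT (show (0:ℝ) < 2 * x by linarith [hx.1])] with t ht
      exact key ht
    exact not_tendsto_atTop_of_tendsto_nhds hcont (hlim.congr' hev)
  have hIoo : Set.Ioo 0 a ⊆ Set.Ioo 0 (2 * a) := Set.Ioo_subset_Ioo_right (by linarith)
  constructor
  · by_contra! hcon
    obtain ⟨t, ht, hpt⟩ := hcon
    have hpos : ∀ s ∈ Set.Ioo 0 a, 0 < p s := by
      intro s hs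
      by_contra! hps
      have hc : ContinuousOn p (Set.Ioo 0 a) := fun u hu =>
        (hp u (hIoo hu)).continuousAt.continuousWithinAt
      obtain ⟨u, hu, hu0⟩ := isPreconnected_Ioo.intermediate_value hs ht hc ⟨hps, hpt⟩
      exact hne u hu hu0
    have hmono : StrictMonoOn f (Set.Ioo 0 a) := by
      refine strictMonoOn_of_deriv_pos (convex_Ioo _ _)
        (fun u hu => (hf u (hIoo hu)).continuousAt.continuousWithinAt) ?_
      intro u hu
      rw [interior_Ioo] at hu
      rw [(hf u (hIoo hu)).deriv]
      exact hpos u hu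
    have h1 := hlim.eventually_ge_atTop (f t)
    obtain ⟨s, hs1, hs2⟩ := (h1.and (Ioo_mem_nhdsGT ht.1)).exists
    exact absurd (hmono ⟨hs2.1, hs2.2.trans ht.2⟩ ht hs2.2) (not_lt.mpr hs1)
  · intro hz
    have key : Set.EqOn f (fun _ => f a) (Set.Ioo 0 (2 * a)) := by
      refine ode_unique (γ := γ) (p := p) (q := fun t => 0) (t₀ := a)
        ⟨ha, by linarith⟩ hf hp (fun t _ => hasDerivAt_const _ _) (fun t _ => ?_) rfl hpa
      rw [hz]
      exact hasDerivAt_const _ _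
    have hev : f =ᶠ[nhdsWithin 0 (Set.Ioi 0)] (fun _ => f a) := by
      filter_upwards [Ioo_mem_nhdsGT (show (0:ℝ) < 2 * a by linarith)] with t ht
      exact key ht
    exact not_tendsto_atTop_of_tendsto_nhds tendsto_const_nhds (hlim.congr' hev)

/-! ### Elliptic integrals -/

/-- The incomplete elliptic integral of the first kind, as a function of the parameter `m = k²` and
the amplitude `ψ`. -/
noncomputable def ellF (m ψ : ℝ) : ℝ :=
  ∫ θ in (0 : ℝ)..ψ, (1 - m * Real.sin θ ^ 2) ^ (-(1 / 2) : ℝ)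

lemma ellF_base_pos {m : ℝ} (hm : m < 1) (θ : ℝ) : 0 < 1 - m * Real.sin θ ^ 2 := by
  have h1 := Real.sin_sq_le_one θ
  have h0 := sq_nonneg (Real.sin θ)
  rcases le_or_gt m 0 with h | h
  · nlinarith
  · nlinarith

lemma ellF_continuous_integrand {m : ℝ} (hm : m < 1) :
    Continuous fun θ : ℝ => (1 - m * Real.sin θ ^ 2) ^ (-(1 / 2) : ℝ) := by
  refine Continuous.rpow_const (by fun_prop) fun θ => Or.inl (ellF_base_pos hm θ).ne'

lemma hasDerivAt_ellF {m : ℝ} (hm : m < 1) (ψ : ℝ) :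
    HasDerivAt (ellF m) ((1 - m * Real.sin ψ ^ 2) ^ (-(1 / 2) : ℝ)) ψ :=
  intervalIntegral.integral_hasDerivAt_right
    ((ellF_continuous_integrand hm).intervalIntegrable _ _)
    (ellF_continuous_integrand hm).stronglyMeasurable.stronglyMeasurableAtFilter
    (ellF_continuous_integrand hm).continuousAt

lemma ellF_pi {m : ℝ} (hm : m < 1) : ellF m π = 2 * ellF m (π / 2) := by
  have hi := fun a b => (ellF_continuous_integrand hm).intervalIntegrable (μ := volume) a b
  have h1 : ∫ θ in (π / 2)..π, (1 - m * Real.sin θ ^ 2) ^ (-(1 / 2) : ℝ) = ellF m (π / 2) := by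
    have := intervalIntegral.integral_comp_sub_left
      (fun θ : ℝ => (1 - m * Real.sin θ ^ 2) ^ (-(1 / 2) : ℝ)) (a := 0) (b := π / 2) π
    simp only [Real.sin_pi_sub, sub_zero] at this
    rw [ellF, this]
    congr 1; ring
  rw [ellF, ← intervalIntegral.integral_add_adjacent_intervals (hi 0 (π / 2)) (hi (π / 2) π), h1,
    ellF]
  ring

lemma ellF_strictMono {m m' : ℝ} (h : m < m') (hm' : m' < 1) :
    ellF m (π / 2) < ellF m' (π / 2) := by
  have hm : m < 1 := h.trans hm'
  have hpi : (0 : ℝ) < π / 2 := by positivity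
  refine intervalIntegral.integral_lt_integral_of_continuousOn_of_le_of_exists_lt hpi
    (ellF_continuous_integrand hm).continuousOn (ellF_continuous_integrand hm').continuousOn ?_ ?_
  · intro θ _
    refine Real.rpow_le_rpow_of_nonpos (ellF_base_pos hm' θ) ?_ (by norm_num)
    nlinarith [sq_nonneg (Real.sin θ)]
  · refine ⟨π / 2, ⟨hpi.le, le_rfl⟩, ?_⟩
    refine Real.rpow_lt_rpow_of_neg (ellF_base_pos hm' _) ?_ (by norm_num)
    simp [h]

lemma ellF_pos {m : ℝ} (hm : m < 1) : 0 < ellF m (π / 2) :=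
  intervalIntegral.intervalIntegral_pos_of_pos
    ((ellF_continuous_integrand hm).intervalIntegrable _ _)
    (fun θ => Real.rpow_pos_of_pos (ellF_base_pos hm θ) _) (by positivity)

/-- The time a solution of `f'² = 4 f (f² + 2 c ρ f + ρ²)` takes to fall from `+∞` to `0`, as a complete
elliptic integral of parameter `(1 - c) / 2`. The substitution `f = ρ tan² (ψ / 2)` turns the equation
into `ψ' = -2 √ρ √(1 - m sin² ψ)`, so that `ellF m ψ + 2 √ρ t` is constant. -/
lemma period_eq_ellF {a c ρ : ℝ} (ha : 0 < a) (hρ : 0 < ρ) (hc1 : -1 < c)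
    {f p : ℝ → ℝ}
    (hf : ∀ t ∈ Set.Ioo 0 a, HasDerivAt f (p t) t)
    (hneg : ∀ t ∈ Set.Ioo 0 a, p t < 0)
    (hpos : ∀ t ∈ Set.Ioo 0 a, 0 < f t)
    (hode : ∀ t ∈ Set.Ioo 0 a, p t ^ 2 = 4 * f t * (f t ^ 2 + 2 * c * ρ * f t + ρ ^ 2))
    (hlim : Filter.Tendsto f (nhdsWithin 0 (Set.Ioi 0)) Filter.atTop)
    (hlim' : Filter.Tendsto f (nhdsWithin a (Set.Iio a)) (nhds 0)) :
    √ρ * a = ellF ((1 - c) / 2) (π / 2) := by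
  set m := (1 - c) / 2 with hm
  have hm1 : m < 1 := by rw [hm]; linarith
  let s : ℝ → ℝ := fun x => √(f x / ρ)
  let ψ : ℝ → ℝ := fun x => 2 * arctan (s x)
  let G : ℝ → ℝ := fun x => ellF m (ψ x) + 2 * √ρ * x
  have hG : ∀ t ∈ Set.Ioo 0 a, HasDerivAt G 0 t := by
    intro t ht
    have hft := hpos t ht
    have hs0 : 0 < s t := Real.sqrt_pos.mpr (by positivity)
    have hs2 : f t = ρ * s t ^ 2 := by
      simp only [s]; rw [Real.sq_sqrt (by positivity)]; field_simp
    have hs : HasDerivAt s (p t / ρ / (2 * s t)) t :=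
      ((hf t ht).div_const ρ).sqrt (by positivity)
    have hψ : HasDerivAt ψ (2 * (1 / (1 + s t ^ 2) * (p t / ρ / (2 * s t)))) t :=
      hs.arctan.const_mul 2
    have hE := (hasDerivAt_ellF hm1 (ψ t)).comp t hψ
    have hG := hE.add ((hasDerivAt_id t).const_mul (2 * √ρ))
    refine HasDerivAt.congr_deriv hG ?_
    set W := s t ^ 4 + 2 * c * s t ^ 2 + 1 with hW
    have hWpos : 0 < W := by nlinarith [sq_nonneg (s t ^ 2 - 1), sq_nonneg (s t ^ 2 + 1), pow_pos hs0 2]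
    have hsin : 1 - m * Real.sin (ψ t) ^ 2 = W / (1 + s t ^ 2) ^ 2 := by
      have h1 : 0 < 1 + s t ^ 2 := by positivity
      have h2 : √(1 + s t ^ 2) ^ 2 = 1 + s t ^ 2 := Real.sq_sqrt h1.le
      have h3 : √(1 + s t ^ 2) ≠ 0 := (Real.sqrt_pos.mpr h1).ne'
      have : Real.sin (ψ t) = 2 * s t / (1 + s t ^ 2) := by
        simp only [ψ]
        rw [Real.sin_two_mul, Real.sin_arctan, Real.cos_arctan]
        field_simp
        rw [h2]
      rw [this, hW, hm]
      field_simp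
      ring
    have hr : (1 - m * Real.sin (ψ t) ^ 2) ^ (-(1 / 2) : ℝ) = (1 + s t ^ 2) / √W := by
      rw [hsin, Real.rpow_neg (by positivity), ← Real.sqrt_eq_rpow, Real.sqrt_div hWpos.le,
        Real.sqrt_sq (by positivity), inv_div]
    have hp : p t = -(2 * (ρ * √ρ) * s t * √W) := by
      have h1 : 0 ≤ 2 * (ρ * √ρ) * s t * √W := by positivity
      have h2 : p t ^ 2 = (2 * (ρ * √ρ) * s t * √W) ^ 2 := by
        have e1 := Real.sq_sqrt hWpos.le
        have e2 := Real.sq_sqrt hρ.le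
        rw [hode t ht, hs2, show (2 * (ρ * √ρ) * s t * √W) ^ 2
          = 4 * ρ ^ 2 * √ρ ^ 2 * s t ^ 2 * √W ^ 2 by ring, e1, e2, hW]; ring
      have h3 := abs_eq_abs.mpr (sq_eq_sq_iff_eq_or_eq_neg.mp h2)
      rw [abs_of_nonneg h1, abs_of_neg (hneg t ht)] at h3
      linarith
    rw [hr, hp]
    have hWs : √W ≠ 0 := (Real.sqrt_pos.mpr hWpos).ne'
    have h1 : 1 + s t ^ 2 ≠ 0 := by positivity
    field_simp
    ring
  have hconst : ∀ x ∈ Set.Ioo 0 a, ∀ y ∈ Set.Ioo 0 a, G x = G y := by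
    intro x hx y hy
    refine isOpen_Ioo.is_const_of_deriv_eq_zero isPreconnected_Ioo
      (fun t ht => (hG t ht).differentiableAt.differentiableWithinAt)
      (fun t ht => (hG t ht).deriv) hx hy
  have hcE : Continuous (ellF m) :=
    continuous_iff_continuousAt.mpr fun ψ => (hasDerivAt_ellF hm1 ψ).continuousAt
  have hmem : a / 2 ∈ Set.Ioo 0 a := ⟨by linarith, by linarith⟩
  have l0 : Filter.Tendsto G (nhdsWithin 0 (Set.Ioi 0)) (nhds (ellF m (2 * (π / 2)) + 2 * √ρ * 0)) := by
    refine Filter.Tendsto.add ?_ ?_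
    · refine (hcE.tendsto _).comp (Filter.Tendsto.const_mul 2 ?_)
      refine ((tendsto_arctan_atTop).mono_right nhdsWithin_le_nhds).comp ?_
      exact Real.tendsto_sqrt_atTop.comp (hlim.atTop_div_const hρ)
    · exact (Filter.tendsto_id.mono_left nhdsWithin_le_nhds).const_mul _
  have la : Filter.Tendsto G (nhdsWithin a (Set.Iio a)) (nhds (ellF m (2 * arctan √(0 / ρ)) + 2 * √ρ * a)) := by
    refine Filter.Tendsto.add ?_ ?_
    · refine (hcE.tendsto _).comp (Filter.Tendsto.const_mul 2 ?_)
      refine (Real.continuous_arctan.tendsto _).comp ?_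
      exact (Real.continuous_sqrt.tendsto _).comp (hlim'.div_const ρ)
    · exact (Filter.tendsto_id.mono_left nhdsWithin_le_nhds).const_mul _
  have e0 := tendsto_nhds_unique l0 (tendsto_const_nhds.congr' (f₁ := fun _ => G (a / 2)) (by
    filter_upwards [Ioo_mem_nhdsGT ha] with t ht using hconst _ hmem _ ht))
  have ea := tendsto_nhds_unique la (tendsto_const_nhds.congr' (f₁ := fun _ => G (a / 2)) (by
    filter_upwards [Ioo_mem_nhdsLT ha] with t ht using hconst _ hmem _ ht))
  have hz : ellF m 0 = 0 := by simp [ellF]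
  have : 2 * (π / 2) = π := by ring
  rw [this, ellF_pi hm1] at e0
  simp [hz] at ea
  linarith

/-! ### Half periods as elliptic integrals -/

/-- The data of the Weierstrass function along a symmetry axis of its lattice: `f` and its derivative
`p` on `(0, 2a)` satisfy the Weierstrass equations with real invariants `γ₂`, `γ₃`, `f` has a pole at
`0`, and `a` is a half period. -/
structure AxisData (a γ₂ γ₃ : ℝ) (f p : ℝ → ℝ) : Prop where
  pos : 0 < a
  hf : ∀ t ∈ Set.Ioo 0 (2 * a), HasDerivAt f (p t) t
  hp : ∀ t ∈ Set.Ioo 0 (2 * a), HasDerivAt p (6 * f t ^ 2 - γ₂ / 2) t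
  hsq : ∀ t ∈ Set.Ioo 0 (2 * a), p t ^ 2 = 4 * f t ^ 3 - γ₂ * f t - γ₃
  hlim : Filter.Tendsto f (nhdsWithin 0 (Set.Ioi 0)) Filter.atTop
  hpa : p a = 0

namespace AxisData

variable {a γ₂ γ₃ : ℝ} {f p : ℝ → ℝ}

lemma strictAntiOn (h : AxisData a γ₂ γ₃ f p) : StrictAntiOn f (Set.Ioc 0 a) := by
  have ha := h.pos
  have hsub : Set.Ioc 0 a ⊆ Set.Ioo 0 (2 * a) := fun t ht => ⟨ht.1, by linarith [ht.2]⟩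
  refine strictAntiOn_of_deriv_neg (convex_Ioc _ _)
    (fun u hu => (h.hf u (hsub hu)).continuousAt.continuousWithinAt) ?_
  intro u hu
  rw [interior_Ioc] at hu
  rw [(h.hf u (hsub (Set.Ioo_subset_Ioc_self hu))).deriv]
  exact (deriv_neg_of_blowup h.pos h.hf h.hp h.hlim h.hpa).1 u hu

lemma gt_endpoint (h : AxisData a γ₂ γ₃ f p) {t : ℝ} (ht : t ∈ Set.Ioo 0 a) : f a < f t :=
  h.strictAntiOn (Set.Ioo_subset_Ioc_self ht) ⟨h.pos, le_rfl⟩ ht.2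

lemma cubic_eq_zero (h : AxisData a γ₂ γ₃ f p) : 4 * f a ^ 3 - γ₂ * f a - γ₃ = 0 := by
  rw [← h.hsq a ⟨h.pos, by linarith [h.pos]⟩, h.hpa]; ring

/-- On `(f a, ∞)`, the range of `f` on `(0, a)`, the Weierstrass cubic is the square of a nonvanishing
derivative. -/
lemma cubic_pos (h : AxisData a γ₂ γ₃ f p) {X : ℝ} (hX : f a < X) :
    0 < 4 * X ^ 3 - γ₂ * X - γ₃ := by
  have ha := h.pos
  obtain ⟨s, hs1, hs2⟩ := ((h.hlim.eventually_gt_atTop X).and (Ioo_mem_nhdsGT ha)).exists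
  have hsub : Set.Icc s a ⊆ Set.Ioo 0 (2 * a) := fun t ht =>
    ⟨by linarith [ht.1, hs2.1], by linarith [ht.2]⟩
  have hc : ContinuousOn f (Set.Icc s a) := fun t ht =>
    (h.hf t (hsub ht)).continuousAt.continuousWithinAt
  obtain ⟨t, ht, rfl⟩ := intermediate_value_Icc' hs2.2.le hc ⟨hX.le, hs1.le⟩
  have hta : t < a := lt_of_le_of_ne ht.2 (by rintro rfl; exact lt_irrefl _ hX)
  rw [← h.hsq t (hsub ht)]
  have := (deriv_neg_of_blowup h.pos h.hf h.hp h.hlim h.hpa).1 t ⟨by linarith [ht.1, hs2.1], hta⟩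
  nlinarith

lemma period (h : AxisData a γ₂ γ₃ f p) {c ρ : ℝ} (hρ : 0 < ρ) (hc : -1 < c)
    (h1 : ρ ^ 2 = 3 * f a ^ 2 - γ₂ / 4) (h2 : 3 * f a = 2 * c * ρ) :
    √ρ * a = ellF ((1 - c) / 2) (π / 2) := by
  have ha := h.pos
  have hsub : Set.Ioo 0 a ⊆ Set.Ioo 0 (2 * a) := fun t ht => ⟨ht.1, by linarith [ht.2]⟩
  refine period_eq_ellF h.pos hρ hc (f := fun t => f t - f a) (p := p)
    (fun t ht => (h.hf t (hsub ht)).sub_const _)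
    (deriv_neg_of_blowup h.pos h.hf h.hp h.hlim h.hpa).1
    (fun t ht => sub_pos.mpr (h.gt_endpoint ht)) ?_
    (Filter.tendsto_atTop_add_const_right _ _ h.hlim) ?_
  · intro t ht
    rw [h.hsq t (hsub ht), h1, ← h2]
    linear_combination h.cubic_eq_zero
  · have : Filter.Tendsto f (nhds a) (nhds (f a)) :=
      (h.hf a ⟨ha, by linarith⟩).continuousAt
    simpa using (this.mono_left nhdsWithin_le_nhds).sub_const (f a)

end AxisData

/-- If two axes carry opposite invariants `γ₃` and opposite half-period values, then `e = f a` is the only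
real root of the Weierstrass cubic and its cofactor is `(X - e)² + 2 c ρ (X - e) + ρ²` with `|c| < 1`.
Both half periods are then complete elliptic integrals, of complementary parameters. -/
lemma axes_periods {a b γ₂ γ₃ : ℝ} {f p g q : ℝ → ℝ} (hf : AxisData a γ₂ γ₃ f p)
    (hg : AxisData b γ₂ (-γ₃) g q) (hab : g b = - f a) :
    ∃ ρ c : ℝ, 0 < ρ ∧ -1 < c ∧ c < 1 ∧ ρ ^ 2 = 3 * f a ^ 2 - γ₂ / 4 ∧ 3 * f a = 2 * c * ρ ∧
      √ρ * a = ellF ((1 - c) / 2) (π / 2) ∧ √ρ * b = ellF ((1 + c) / 2) (π / 2) := by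
  set e := f a with he
  have hz := hf.cubic_eq_zero
  rw [← he] at hz
  have hne := (deriv_neg_of_blowup hf.pos hf.hf hf.hp hf.hlim hf.hpa).2
  rw [← he] at hne
  -- the quadratic cofactor of the cubic is positive away from `e`: one axis gives `X > e`, the other
  -- gives `X < e`
  have hQ : ∀ X, X ≠ e → 0 < X ^ 2 + e * X + (e ^ 2 - γ₂ / 4) := by
    intro X hX
    rcases lt_or_gt_of_ne hX with h | h
    · have h1 := hg.cubic_pos (X := -X) (by rw [hab]; linarith)
      have h2 : 0 < 4 * (e - X) * (X ^ 2 + e * X + (e ^ 2 - γ₂ / 4)) := by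
        have : 4 * (e - X) * (X ^ 2 + e * X + (e ^ 2 - γ₂ / 4))
          = 4 * (-X) ^ 3 - γ₂ * (-X) - -γ₃ := by linear_combination hz
        rw [this]; exact h1
      exact pos_of_mul_pos_right h2 (by linarith)
    · have h1 := hf.cubic_pos (X := X) h
      have h2 : 0 < 4 * (X - e) * (X ^ 2 + e * X + (e ^ 2 - γ₂ / 4)) := by
        have : 4 * (X - e) * (X ^ 2 + e * X + (e ^ 2 - γ₂ / 4))
          = 4 * X ^ 3 - γ₂ * X - γ₃ := by linear_combination -hz
        rw [this]; exact h1
      exact pos_of_mul_pos_right h2 (by linarith)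
  have hQe : 0 < 3 * e ^ 2 - γ₂ / 4 := by
    by_contra! hcon
    have hlt : 0 < -(3 * e ^ 2 - γ₂ / 4) := by
      rcases hcon.lt_or_eq with h | h
      · linarith
      · exact absurd (by linarith) hne
    set δ := √(-(3 * e ^ 2 - γ₂ / 4)) with hδ
    have hδ0 : 0 < δ := Real.sqrt_pos.mpr hlt
    have hδ2 : δ ^ 2 = -(3 * e ^ 2 - γ₂ / 4) := Real.sq_sqrt hlt.le
    have h1 := hQ (e + δ) (by linarith)
    have h2 := hQ (e - δ) (by linarith)
    nlinarith
  have hdisc : γ₂ < 3 * e ^ 2 := by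
    rcases eq_or_ne e 0 with h0 | h0
    · rw [h0] at hQe ⊢; linarith
    · have := hQ (-e / 2) (by intro h; apply h0; linarith)
      nlinarith
  set ρ := √(3 * e ^ 2 - γ₂ / 4) with hρ
  have hρ0 : 0 < ρ := Real.sqrt_pos.mpr hQe
  have hρ2 : ρ ^ 2 = 3 * e ^ 2 - γ₂ / 4 := Real.sq_sqrt hQe.le
  have habs : |3 * e| < 2 * ρ := by
    refine abs_lt_of_sq_lt_sq ?_ (by positivity)
    nlinarith
  rw [abs_lt] at habs
  have h2 : 3 * e = 2 * (3 * e / (2 * ρ)) * ρ := by field_simp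
  have hc1 : -1 < 3 * e / (2 * ρ) := by rw [lt_div_iff₀ (by positivity)]; linarith
  have hc2 : 3 * e / (2 * ρ) < 1 := by rw [div_lt_one (by positivity)]; linarith
  refine ⟨ρ, 3 * e / (2 * ρ), hρ0, hc1, hc2, hρ2, h2, hf.period hρ0 hc1 hρ2 h2, ?_⟩
  have := hg.period (c := -(3 * e / (2 * ρ))) hρ0 (by linarith) (by rw [hab, hρ2]; ring)
    (by rw [hab]; linear_combination -h2)
  rw [this]; congr 1; ring

/-- The modulus is determined by the ratio of the periods, since `K` increases and `K'` decreases
with it. -/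
lemma modulus_unique {m μ r : ℝ} (hm0 : 0 < m) (hm1 : m < 1) (hμ0 : 0 < μ) (hμ1 : μ < 1)
    (h1 : r * ellF μ (π / 2) = ellF m (π / 2))
    (h2 : r * ellF (1 - μ) (π / 2) = ellF (1 - m) (π / 2)) : m = μ ∧ r = 1 := by
  have p1 := ellF_pos hμ1
  have p2 := ellF_pos (m := 1 - μ) (by linarith)
  have hmμ : m = μ := by
    rcases lt_trichotomy m μ with h | h | h
    · have a1 := ellF_strictMono h hμ1
      have a2 := ellF_strictMono (m := 1 - μ) (m' := 1 - m) (by linarith) (by linarith)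
      rw [← h1] at a1; rw [← h2] at a2
      nlinarith
    · exact h
    · have a1 := ellF_strictMono h hm1
      have a2 := ellF_strictMono (m := 1 - m) (m' := 1 - μ) (by linarith) (by linarith)
      rw [← h1] at a1; rw [← h2] at a2
      nlinarith
  refine ⟨hmμ, ?_⟩
  rw [hmμ] at h1
  nlinarith [mul_right_cancel₀ p1.ne' (h1.trans (one_mul _).symm)]

/-! ### The Weierstrass function -/

namespace PeriodPair

variable (L : PeriodPair)

lemma countable_lattice : (L.lattice : Set ℂ).Countable := by
  have : Countable L.lattice := L.latticeEquivProd.toEquiv.injective.countable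
  exact Set.to_countable _

lemma isPreconnected_compl_lattice : IsPreconnected ((L.lattice : Set ℂ)ᶜ) :=
  (L.countable_lattice.isConnected_compl_of_one_lt_rank
    (by rw [Complex.rank_real_complex]; norm_num)).isPreconnected

lemma weierstrassP_eq_add (z : ℂ) :
    L.weierstrassP z = L.weierstrassPExcept 0 z + 1 / z ^ 2 := by
  have := L.weierstrassPExcept_add 0 z
  simpa using this.symm

lemma tendsto_weierstrassPExcept_zero :
    Filter.Tendsto (L.weierstrassPExcept 0) (nhds 0) (nhds 0) := by
  have h := (L.analyticAt_weierstrassPExcept 0).continuousAt.tendsto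
  simpa using h

lemma hasDerivAt_weierstrassP {z : ℂ} (hz : z ∉ L.lattice) :
    HasDerivAt L.weierstrassP (L.derivWeierstrassP z) z := by
  rw [← L.deriv_weierstrassP]
  exact (L.analyticOnNhd_weierstrassP z hz).differentiableAt.hasDerivAt

/-- `℘` is not constant, having a double pole at `0`. -/
lemma not_forall_derivWeierstrassP_eq_zero :
    ¬ ∀ z ∈ (L.lattice : Set ℂ)ᶜ, L.derivWeierstrassP z = 0 := by
  intro h
  obtain ⟨C, hC⟩ := L.isClosed_lattice.isOpen_compl.exists_is_const_of_deriv_eq_zero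
    L.isPreconnected_compl_lattice L.differentiableOn_weierstrassP
    (fun z hz => by rw [L.deriv_weierstrassP]; exact h z hz)
  have h1 : Filter.Tendsto (fun z : ℂ => z ^ 2 * (C - L.weierstrassPExcept 0 z))
      (nhdsWithin 0 {0}ᶜ) (nhds (0 ^ 2 * (C - 0))) := by
    refine Filter.Tendsto.mono_left ?_ nhdsWithin_le_nhds
    exact ((continuous_pow 2).tendsto 0).mul
      (tendsto_const_nhds.sub L.tendsto_weierstrassPExcept_zero)
  have h2 : (fun z : ℂ => z ^ 2 * (C - L.weierstrassPExcept 0 z)) =ᶠ[nhdsWithin 0 {0}ᶜ]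
      fun _ => 1 := by
    filter_upwards [mem_nhdsWithin_of_mem_nhds (L.compl_lattice_sdiff_singleton_mem_nhds 0),
      self_mem_nhdsWithin] with z hz hz0
    have hz' : z ∈ (L.lattice : Set ℂ)ᶜ := fun hzl => hz ⟨hzl, hz0⟩
    have hz0' : z ≠ 0 := hz0
    rw [← hC z hz', L.weierstrassP_eq_add]
    field_simp
    ring
  have h3 := tendsto_nhds_unique h1 (tendsto_const_nhds.congr' h2.symm)
  norm_num at h3

/-- The equation `℘'' = 6 ℘² - g₂ / 2`, obtained by differentiating the Weierstrass equation and
cancelling `℘'`, which is analytic and not identically zero on a connected set. -/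
lemma hasDerivAt_derivWeierstrassP {z : ℂ} (hz : z ∉ L.lattice) :
    HasDerivAt L.derivWeierstrassP (6 * L.weierstrassP z ^ 2 - L.g₂ / 2) z := by
  have hop := L.isClosed_lattice.isOpen_compl
  have hA := L.analyticOnNhd_weierstrassP
  have hA' := L.analyticOnNhd_derivWeierstrassP
  have hB : AnalyticOnNhd ℂ (fun z => deriv L.derivWeierstrassP z
      - (6 * L.weierstrassP z ^ 2 - L.g₂ / 2)) (L.lattice : Set ℂ)ᶜ :=
    hA'.deriv.sub (((hA.pow 2).const_smul (c := (6 : ℂ))).sub analyticOnNhd_const)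
  have hmul : ∀ z ∈ (L.lattice : Set ℂ)ᶜ, L.derivWeierstrassP z * (deriv L.derivWeierstrassP z
      - (6 * L.weierstrassP z ^ 2 - L.g₂ / 2)) = 0 := by
    intro z hz
    have h1 := (hA' z hz).differentiableAt.hasDerivAt.pow 2
    have h2 := L.hasDerivAt_weierstrassP hz
    have h3 := (((h2.pow 3).const_mul 4).sub (h2.const_mul L.g₂)).sub_const L.g₃
    have heq : (L.derivWeierstrassP ^ 2) =ᶠ[nhds z]
        (fun z => 4 * L.weierstrassP z ^ 3 - L.g₂ * L.weierstrassP z - L.g₃) := by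
      filter_upwards [hop.mem_nhds hz] with w hw
      exact L.derivWeierstrassP_sq w hw
    have h4 := (h1.congr_of_eventuallyEq heq.symm).unique h3
    norm_num at h4
    linear_combination h4 / 2
  rcases hA'.eq_zero_or_eq_zero_of_mul_eq_zero hB hmul L.isPreconnected_compl_lattice with h | h
  · exact absurd h L.not_forall_derivWeierstrassP_eq_zero
  · have := (hA' z hz).differentiableAt.hasDerivAt
    rwa [sub_eq_zero.mp (h z hz)] at this

section Conj
variable {L}

/-- Complex conjugation as a permutation of a conjugation-invariant lattice. -/
def conjEquiv (hL : ∀ z ∈ L.lattice, (starRingEnd ℂ) z ∈ L.lattice) : L.lattice ≃ L.lattice where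
  toFun l := ⟨(starRingEnd ℂ) l, hL _ l.2⟩
  invFun l := ⟨(starRingEnd ℂ) l, hL _ l.2⟩
  left_inv l := by simp
  right_inv l := by simp

lemma conj_weierstrassP (hL : ∀ z ∈ L.lattice, (starRingEnd ℂ) z ∈ L.lattice) (z : ℂ) :
    (starRingEnd ℂ) (L.weierstrassP z) = L.weierstrassP ((starRingEnd ℂ) z) := by
  rw [weierstrassP, Complex.conj_tsum, weierstrassP, ← (conjEquiv hL).tsum_eq]
  simp [conjEquiv]

lemma conj_derivWeierstrassP (hL : ∀ z ∈ L.lattice, (starRingEnd ℂ) z ∈ L.lattice) (z : ℂ) :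
    (starRingEnd ℂ) (L.derivWeierstrassP z) = L.derivWeierstrassP ((starRingEnd ℂ) z) := by
  rw [derivWeierstrassP, map_neg, Complex.conj_tsum, derivWeierstrassP, ← (conjEquiv hL).tsum_eq]
  simp [conjEquiv, Complex.conj_ofNat]

lemma conj_G (hL : ∀ z ∈ L.lattice, (starRingEnd ℂ) z ∈ L.lattice) (n : ℕ) :
    (starRingEnd ℂ) (L.G n) = L.G n := by
  rw [G, Complex.conj_tsum, ← (conjEquiv hL).tsum_eq]
  simp [conjEquiv]

end Conj

end PeriodPair

/-! ### Rhombic lattices -/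

/-- The rhombic period pair `a ± b i`; its real and imaginary periods are `2a` and `2b i`. -/
noncomputable def rhombic (a b : ℝ) (ha : 0 < a) (hb : 0 < b) : PeriodPair where
  ω₁ := a + b * Complex.I
  ω₂ := a - b * Complex.I
  indep := by
    rw [LinearIndependent.pair_iff]
    intro s t h
    have h1 := congrArg Complex.re h
    have h2 := congrArg Complex.im h
    simp at h1 h2
    have e1 : s + t = 0 := by
      have : (s + t) * a = 0 := by linarith
      exact (mul_eq_zero.mp this).resolve_right ha.ne'
    have e2 : s - t = 0 := by
      have : (s - t) * b = 0 := by linarith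
      exact (mul_eq_zero.mp this).resolve_right hb.ne'
    constructor <;> linarith

section Rhombic

variable {a b : ℝ} (ha : 0 < a) (hb : 0 < b)

lemma rhombic_conj (z : ℂ) (hz : z ∈ (rhombic a b ha hb).lattice) :
    (starRingEnd ℂ) z ∈ (rhombic a b ha hb).lattice := by
  rw [PeriodPair.mem_lattice] at hz ⊢
  obtain ⟨m, n, rfl⟩ := hz
  refine ⟨n, m, ?_⟩
  simp [rhombic]
  ring

lemma rhombic_real_notMem {t : ℝ} (ht : t ∈ Set.Ioo 0 (2 * a)) :
    (t : ℂ) ∉ (rhombic a b ha hb).lattice := by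
  rw [PeriodPair.mem_lattice]
  rintro ⟨m, n, h⟩
  have h1 := congrArg Complex.re h
  have h2 := congrArg Complex.im h
  simp [rhombic] at h1 h2
  have e2 : (m : ℝ) = n := by
    have : ((m : ℝ) - n) * b = 0 := by linarith
    linarith [(mul_eq_zero.mp this).resolve_right hb.ne']
  rw [← e2] at h1
  have e3 : (m : ℝ) * (2 * a) = t := by linarith
  have hm0 : (0 : ℝ) < m := by
    have := ht.1; rw [← e3] at this; exact pos_of_mul_pos_left this (by linarith)
  have hm1 : (m : ℝ) < 1 := by
    have := ht.2; rw [← e3] at this; nlinarith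
  have : 0 < m := by exact_mod_cast hm0
  have : m < 1 := by exact_mod_cast hm1
  omega

lemma rhombic_imag_notMem {t : ℝ} (ht : t ∈ Set.Ioo 0 (2 * b)) :
    (Complex.I * t : ℂ) ∉ (rhombic a b ha hb).lattice := by
  rw [PeriodPair.mem_lattice]
  rintro ⟨m, n, h⟩
  have h1 := congrArg Complex.re h
  have h2 := congrArg Complex.im h
  simp [rhombic] at h1 h2
  have e2 : (n : ℝ) = -m := by
    have : ((m : ℝ) + n) * a = 0 := by linarith
    linarith [(mul_eq_zero.mp this).resolve_right ha.ne']
  rw [e2] at h2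
  have e3 : (m : ℝ) * (2 * b) = t := by linarith
  have hm0 : (0 : ℝ) < m := by
    have := ht.1; rw [← e3] at this; exact pos_of_mul_pos_left this (by linarith)
  have hm1 : (m : ℝ) < 1 := by
    have := ht.2; rw [← e3] at this; nlinarith
  have : 0 < m := by exact_mod_cast hm0
  have : m < 1 := by exact_mod_cast hm1
  omega

lemma rhombic_two_a_mem : (2 * a : ℂ) ∈ (rhombic a b ha hb).lattice := by
  rw [PeriodPair.mem_lattice]
  exact ⟨1, 1, by simp [rhombic]; ring⟩

lemma rhombic_two_b_mem : (2 * (Complex.I * b) : ℂ) ∈ (rhombic a b ha hb).lattice := by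
  rw [PeriodPair.mem_lattice]
  exact ⟨1, -1, by simp [rhombic]; ring⟩

lemma derivWeierstrassP_half {L : PeriodPair} {z : ℂ} (hz : 2 * z ∈ L.lattice) :
    L.derivWeierstrassP z = 0 := by
  have h := L.derivWeierstrassP_add_coe (-z) ⟨2 * z, hz⟩
  rw [L.derivWeierstrassP_neg] at h
  have : -z + 2 * z = z := by ring
  simp only [this] at h
  linear_combination h / 2

lemma re_cast_of_conj {z : ℂ} (h : (starRingEnd ℂ) z = z) : ((z.re : ℝ) : ℂ) = z :=
  Complex.conj_eq_iff_re.mp h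

lemma axisData_real : AxisData a (rhombic a b ha hb).g₂.re (rhombic a b ha hb).g₃.re
    (fun t => ((rhombic a b ha hb).weierstrassP t).re)
    (fun t => ((rhombic a b ha hb).derivWeierstrassP t).re) := by
  set L := rhombic a b ha hb with hL
  have hconj := rhombic_conj ha hb
  rw [← hL] at hconj
  have hP : ∀ t : ℝ, (((L.weierstrassP t).re : ℝ) : ℂ) = L.weierstrassP t := fun t =>
    re_cast_of_conj (by rw [PeriodPair.conj_weierstrassP hconj]; simp)
  have hP' : ∀ t : ℝ, (((L.derivWeierstrassP t).re : ℝ) : ℂ) = L.derivWeierstrassP t := fun t =>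
    re_cast_of_conj (by rw [PeriodPair.conj_derivWeierstrassP hconj]; simp)
  have hg₂ : ((L.g₂.re : ℝ) : ℂ) = L.g₂ := re_cast_of_conj (by
    rw [PeriodPair.g₂, map_mul, PeriodPair.conj_G hconj, Complex.conj_ofNat])
  have hg₃ : ((L.g₃.re : ℝ) : ℂ) = L.g₃ := re_cast_of_conj (by
    rw [PeriodPair.g₃, map_mul, PeriodPair.conj_G hconj, Complex.conj_ofNat])
  refine ⟨ha, ?_, ?_, ?_, ?_, ?_⟩
  · intro t ht
    exact (L.hasDerivAt_weierstrassP (rhombic_real_notMem ha hb ht)).real_of_complex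
  · intro t ht
    refine (L.hasDerivAt_derivWeierstrassP
      (rhombic_real_notMem ha hb ht)).real_of_complex.congr_deriv ?_
    rw [← hP t, ← hg₂]
    norm_cast
  · intro t ht
    have := L.derivWeierstrassP_sq t (rhombic_real_notMem ha hb ht)
    rw [← hP t, ← hP' t, ← hg₂, ← hg₃] at this
    exact_mod_cast this
  · have h1 : Filter.Tendsto (fun t : ℝ => (L.weierstrassPExcept 0 t).re)
        (nhdsWithin 0 (Set.Ioi 0)) (nhds 0) := by
      have h2 : Filter.Tendsto (fun t : ℝ => (t : ℂ)) (nhdsWithin 0 (Set.Ioi 0)) (nhds 0) := by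
        have := (Complex.continuous_ofReal.tendsto 0).mono_left
          (nhdsWithin_le_nhds (s := Set.Ioi (0 : ℝ)))
        simpa using this
      exact (Complex.continuous_re.tendsto _).comp (L.tendsto_weierstrassPExcept_zero.comp h2)
    have h3 : Filter.Tendsto (fun t : ℝ => (t ^ 2)⁻¹) (nhdsWithin 0 (Set.Ioi 0)) Filter.atTop := by
      have := (Filter.tendsto_pow_atTop (α := ℝ) two_ne_zero).comp tendsto_inv_nhdsGT_zero
      exact this.congr fun t => by simp
    refine (h1.add_atTop h3).congr fun t => ?_
    rw [L.weierstrassP_eq_add]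
    have : (1 / (t : ℂ) ^ 2) = (((t ^ 2)⁻¹ : ℝ) : ℂ) := by simp
    rw [this, Complex.add_re, Complex.ofReal_re]
  · rw [derivWeierstrassP_half (rhombic_two_a_mem ha hb)]; rfl

/-- On the imaginary axis `t ↦ -℘(i t)` satisfies the Weierstrass equations with `g₃` replaced by
`-g₃`. -/
lemma axisData_imag : AxisData b (rhombic a b ha hb).g₂.re (-(rhombic a b ha hb).g₃.re)
    (fun t => (-(rhombic a b ha hb).weierstrassP (Complex.I * t)).re)
    (fun t => (-(Complex.I * (rhombic a b ha hb).derivWeierstrassP (Complex.I * t))).re) := by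
  set L := rhombic a b ha hb with hL
  have hconj := rhombic_conj ha hb
  rw [← hL] at hconj
  have hP : ∀ t : ℝ, (((-L.weierstrassP (Complex.I * t)).re : ℝ) : ℂ)
      = -L.weierstrassP (Complex.I * t) := fun t =>
    re_cast_of_conj (by rw [map_neg, PeriodPair.conj_weierstrassP hconj]; simp)
  have hP' : ∀ t : ℝ, (((-(Complex.I * L.derivWeierstrassP (Complex.I * t))).re : ℝ) : ℂ)
      = -(Complex.I * L.derivWeierstrassP (Complex.I * t)) := fun t =>
    re_cast_of_conj (by
      rw [map_neg, map_mul, PeriodPair.conj_derivWeierstrassP hconj]; simp)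
  have hg₂ : ((L.g₂.re : ℝ) : ℂ) = L.g₂ := re_cast_of_conj (by
    rw [PeriodPair.g₂, map_mul, PeriodPair.conj_G hconj, Complex.conj_ofNat])
  have hg₃ : ((L.g₃.re : ℝ) : ℂ) = L.g₃ := re_cast_of_conj (by
    rw [PeriodPair.g₃, map_mul, PeriodPair.conj_G hconj, Complex.conj_ofNat])
  have hI : ∀ z : ℂ, HasDerivAt (fun z => Complex.I * z) Complex.I z := fun z => by
    simpa using (hasDerivAt_id z).const_mul Complex.I
  refine ⟨hb, ?_, ?_, ?_, ?_, ?_⟩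
  · intro t ht
    refine HasDerivAt.real_of_complex (e := fun z => -L.weierstrassP (Complex.I * z)) ?_
    refine ((L.hasDerivAt_weierstrassP (rhombic_imag_notMem ha hb ht)).comp (t : ℂ)
      (hI t)).neg.congr_deriv ?_
    ring
  · intro t ht
    have h1 := ((L.hasDerivAt_derivWeierstrassP (rhombic_imag_notMem ha hb ht)).comp (t : ℂ)
      (hI t)).const_mul Complex.I |>.neg
    refine (HasDerivAt.real_of_complex
      (e := fun z => -(Complex.I * L.derivWeierstrassP (Complex.I * z))) h1).congr_deriv ?_
    have : -(Complex.I * ((6 * L.weierstrassP (Complex.I * t) ^ 2 - L.g₂ / 2) * Complex.I))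
        = 6 * (-L.weierstrassP (Complex.I * t)) ^ 2 - L.g₂ / 2 := by
      linear_combination -(6 * L.weierstrassP (Complex.I * t) ^ 2 - L.g₂ / 2) * Complex.I_sq
    rw [this, ← hP t, ← hg₂]
    norm_cast
  · intro t ht
    have h1 := L.derivWeierstrassP_sq _ (rhombic_imag_notMem ha hb ht)
    have h2 : (-(Complex.I * L.derivWeierstrassP (Complex.I * t))) ^ 2 =
        4 * (-L.weierstrassP (Complex.I * t)) ^ 3 - L.g₂ * (-L.weierstrassP (Complex.I * t))
          - -L.g₃ := by
      linear_combination L.derivWeierstrassP (Complex.I * t) ^ 2 * Complex.I_sq - h1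
    rw [← hP t, ← hP' t, ← hg₂, ← hg₃] at h2
    exact_mod_cast h2
  · have h1 : Filter.Tendsto (fun t : ℝ => (-L.weierstrassPExcept 0 (Complex.I * t)).re)
        (nhdsWithin 0 (Set.Ioi 0)) (nhds 0) := by
      have h2 : Filter.Tendsto (fun t : ℝ => (Complex.I * t : ℂ)) (nhdsWithin 0 (Set.Ioi 0))
          (nhds 0) := by
        have := ((Complex.continuous_ofReal.tendsto 0).const_mul Complex.I).mono_left
          (nhdsWithin_le_nhds (s := Set.Ioi (0 : ℝ)))
        simpa using this
      have := (Complex.continuous_re.tendsto _).comp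
        (L.tendsto_weierstrassPExcept_zero.comp h2).neg
      rw [neg_zero] at this
      exact this
    have h3 : Filter.Tendsto (fun t : ℝ => (t ^ 2)⁻¹) (nhdsWithin 0 (Set.Ioi 0)) Filter.atTop := by
      have := (Filter.tendsto_pow_atTop (α := ℝ) two_ne_zero).comp tendsto_inv_nhdsGT_zero
      exact this.congr fun t => by simp
    refine (h1.add_atTop h3).congr fun t => ?_
    rw [L.weierstrassP_eq_add]
    have : (1 / (Complex.I * t : ℂ) ^ 2) = -(((t ^ 2)⁻¹ : ℝ) : ℂ) := by
      rw [mul_pow, Complex.I_sq]; simp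
    rw [this, neg_add, neg_neg, Complex.add_re, Complex.ofReal_re]
  · rw [hL, derivWeierstrassP_half (rhombic_two_b_mem ha hb)]; simp

/-- The half periods `a` and `b i` differ by the period `a - b i`. -/
lemma rhombic_half_eq : (rhombic a b ha hb).weierstrassP (Complex.I * b)
    = (rhombic a b ha hb).weierstrassP a := by
  set L := rhombic a b ha hb with hL
  have hmem : (a - Complex.I * b : ℂ) ∈ L.lattice := by
    rw [PeriodPair.mem_lattice]
    exact ⟨0, 1, by simp [hL, rhombic]; ring⟩
  have := L.weierstrassP_add_coe (Complex.I * b) ⟨_, hmem⟩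
  rw [← this]; congr 1; simp

end Rhombic

/-- For the half periods `a = K'` and `b = K` the parameter found from the two axes must be `m` and the
scale `ρ` must be `1`, which gives the half-period value and the invariant `g₂` explicitly. -/
lemma rhombic_invariants {m : ℝ} (hm0 : 0 < m) (hm1 : m < 1)
    (ha : 0 < ellF (1 - m) (π / 2)) (hb : 0 < ellF m (π / 2)) :
    (rhombic _ _ ha hb).weierstrassP (ellF (1 - m) (π / 2) : ℝ) = -(2 / 3) * (1 - 2 * m) ∧
    (rhombic _ _ ha hb).g₂ = 12 * (-(2 / 3) * (1 - 2 * m)) ^ 2 - 4 := by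
  set L := rhombic _ _ ha hb with hL
  have hconj := rhombic_conj ha hb
  rw [← hL] at hconj
  obtain ⟨ρ, c, hρ, hc1, hc2, h1, h2, h3, h4⟩ :=
    axes_periods (axisData_real ha hb) (axisData_imag ha hb) (by rw [rhombic_half_eq]; simp)
  have hs : 0 < √ρ := Real.sqrt_pos.mpr hρ
  obtain ⟨e1, e2⟩ := modulus_unique (m := (1 + c) / 2) (μ := m) (r := √ρ) (by linarith)
    (by linarith) hm0 hm1 h4 (by rw [h3]; congr 1; ring)
  have hρ1 : ρ = 1 := by rw [← Real.sq_sqrt hρ.le, e2]; norm_num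
  have hP : (((L.weierstrassP (ellF (1 - m) (π / 2) : ℝ)).re : ℝ) : ℂ) = L.weierstrassP (ellF (1 - m) (π / 2) : ℝ) :=
    re_cast_of_conj (by rw [PeriodPair.conj_weierstrassP hconj]; simp)
  have hg₂ : ((L.g₂.re : ℝ) : ℂ) = L.g₂ := re_cast_of_conj (by
    rw [PeriodPair.g₂, map_mul, PeriodPair.conj_G hconj, Complex.conj_ofNat])
  simp only [← hL] at h1 h2
  have hr : (L.weierstrassP (ellF (1 - m) (π / 2) : ℝ)).re = -(2 / 3) * (1 - 2 * m) := by
    rw [hρ1] at h2; linarith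
  rw [hr, hρ1] at h1
  have hr2 : L.g₂.re = 12 * (-(2 / 3) * (1 - 2 * m)) ^ 2 - 4 := by linarith
  rw [← hP, ← hg₂, hr, hr2]
  push_cast
  exact ⟨rfl, rfl⟩

/-! ### Moment integrals as sums over a quadrant -/

/-- The point with half-integer coordinates `(i₁ + 1/2, i₂ + 1/2)` with respect to `u, v`. -/
noncomputable def halfPt (u v : ℂ) (i : ℕ × ℕ) : ℂ := (i.1 + 1 / 2) * u + (i.2 + 1 / 2) * v

lemma halfPt_re (p q : ℝ) (i : ℕ × ℕ) :
    (halfPt (p + q * Complex.I) (p - q * Complex.I) i).re = (i.1 + i.2 + 1) * p := by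
  simp [halfPt]
  ring

lemma norm_pow_mul_exp (r : ℂ) (N : ℕ) {t : ℝ} (ht : 0 < t) :
    ‖(t : ℂ) ^ N * Complex.exp (-(r * t))‖ = t ^ N * Real.exp (-(r.re * t)) := by
  rw [norm_mul, norm_pow, Complex.norm_real, Complex.norm_exp, Real.norm_of_nonneg ht.le]
  simp

lemma integral_norm_pow_mul_exp {r : ℂ} (hr : 0 < r.re) (N : ℕ) :
    ∫ t : ℝ in Set.Ioi 0, ‖(t : ℂ) ^ N * Complex.exp (-(r * t))‖
      = N.factorial * (r.re ^ (N + 1))⁻¹ := by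
  rw [setIntegral_congr_fun measurableSet_Ioi fun t ht => norm_pow_mul_exp r N ht]
  have h := Real.integral_rpow_mul_exp_neg_mul_Ioi (a := (N + 1 : ℝ)) (r := r.re)
    (by positivity) hr
  rw [Real.Gamma_nat_eq_factorial] at h
  simp only [add_sub_cancel_right, Real.rpow_natCast] at h
  rw [h]
  have : (1 / r.re) ^ (N + 1 : ℝ) = (1 / r.re) ^ (N + 1) := by
    rw [← Real.rpow_natCast]; push_cast; rfl
  rw [this]
  simp [mul_comm]

lemma integrable_pow_mul_exp {r : ℂ} (hr : 0 < r.re) (N : ℕ) :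
    Integrable (fun t : ℝ => (t : ℂ) ^ N * Complex.exp (-(r * t)))
      (volume.restrict (Set.Ioi 0)) := by
  refine (integrable_norm_iff (by fun_prop)).mp (Integrable.of_integral_ne_zero ?_)
  rw [integral_norm_pow_mul_exp hr N]
  positivity

lemma integral_pow_mul_exp {r : ℂ} (hr : 0 < r.re) (N : ℕ) :
    ∫ t : ℝ in Set.Ioi 0, (t : ℂ) ^ N * Complex.exp (-(r * t)) = N.factorial * (r ^ (N + 1))⁻¹ := by
  have hr0 : r ≠ 0 := by rintro rfl; simp at hr
  induction N with
  | zero =>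
    have h := integral_exp_mul_complex_Ioi (a := -r) (by simpa using hr) 0
    simpa using h
  | succ N ih =>
    have hd : ∀ t : ℝ, HasDerivAt (fun t : ℝ => (t : ℂ) ^ (N + 1) * Complex.exp (-(r * t)))
        ((N + 1) * ((t : ℂ) ^ N * Complex.exp (-(r * t)))
          - r * ((t : ℂ) ^ (N + 1) * Complex.exp (-(r * t)))) t := by
      intro t
      have h1 : HasDerivAt (fun z : ℂ => z ^ (N + 1) * Complex.exp (-(r * z)))
          ((N + 1) * ((t : ℂ) ^ N * Complex.exp (-(r * t)))
          - r * ((t : ℂ) ^ (N + 1) * Complex.exp (-(r * t)))) t := by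
        have := (hasDerivAt_pow (N + 1) (t : ℂ)).mul
          (((hasDerivAt_id (t : ℂ)).const_mul r).neg.cexp)
        refine this.congr_deriv ?_
        push_cast
        simp only [id, Pi.neg_apply]
        ring
      exact h1.comp_ofReal
    have hi1 := integrable_pow_mul_exp hr N
    have hi2 := integrable_pow_mul_exp hr (N + 1)
    have hi := (hi1.const_mul (N + 1 : ℂ)).sub (hi2.const_mul r)
    have hlim := tendsto_zero_of_hasDerivAt_of_integrableOn_Ioi (a := 0) (fun t _ => hd t) hi hi2
    have h := integral_Ioi_of_hasDerivAt_of_tendsto' (a := 0) (fun t _ => hd t) hi hlim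
    rw [integral_sub (hi1.const_mul _) (hi2.const_mul _), integral_const_mul,
      integral_const_mul, ih] at h
    have h' : r * ∫ t : ℝ in Set.Ioi 0, (t : ℂ) ^ (N + 1) * Complex.exp (-(r * t))
        = (N + 1) * (N.factorial * (r ^ (N + 1))⁻¹) := by
      have h0 : ((0 : ℝ) : ℂ) ^ (N + 1) * Complex.exp (-(r * (0 : ℝ))) = 0 := by simp
      rw [h0] at h
      linear_combination -h
    rw [← mul_right_inj' hr0, h', Nat.factorial_succ]
    push_cast
    field_simp
    ring

lemma summable_halfPt {p : ℝ} (hp : 0 < p) {N : ℕ} (hN : 3 ≤ N) :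
    Summable fun i : ℕ × ℕ => ((((i.1 : ℝ) + i.2 + 1) * p) ^ (N + 1))⁻¹ := by
  have h1 : Summable fun a : ℕ => (((a : ℝ) + 1) ^ 2)⁻¹ := by
    have := (summable_nat_add_iff 1).mpr (Real.summable_nat_pow_inv.mpr one_lt_two)
    exact this.congr fun a => by push_cast; rfl
  have h2 := h1.mul_of_nonneg h1 (fun a => by positivity) (fun a => by positivity)
  refine Summable.of_nonneg_of_le (fun i => by positivity) (fun i => ?_)
    (h2.mul_left ((p ^ (N + 1))⁻¹))
  rw [mul_pow, mul_inv, mul_comm, ← mul_inv (((i.1 : ℝ) + 1) ^ 2)]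
  gcongr
  have hx : (0 : ℝ) ≤ i.1 := by positivity
  have hy : (0 : ℝ) ≤ i.2 := by positivity
  calc ((i.1 : ℝ) + 1) ^ 2 * ((i.2 : ℝ) + 1) ^ 2 = (((i.1 : ℝ) + 1) * ((i.2 : ℝ) + 1)) ^ 2 := by ring
    _ ≤ (((i.1 : ℝ) + i.2 + 1) ^ 2) ^ 2 := by gcongr; nlinarith
    _ = ((i.1 : ℝ) + i.2 + 1) ^ 4 := by ring
    _ ≤ ((i.1 : ℝ) + i.2 + 1) ^ (N + 1) := pow_le_pow_right₀ (by linarith) (by omega)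

/-- The product of two geometric series in `exp (-(p ± q i) t)`. -/
lemma inv_cosh_sub_cos (p q : ℝ) (hp : 0 < p) {t : ℝ} (ht : 0 < t) :
    ∑' i : ℕ × ℕ, Complex.exp (-(halfPt (p + q * Complex.I) (p - q * Complex.I) i * t))
      = 1 / (2 * (Real.cosh (p * t) - Real.cos (q * t) : ℝ)) := by
  set z := Complex.exp (-((p + q * Complex.I) * t)) with hz
  set w := Complex.exp (-((p - q * Complex.I) * t)) with hw
  have hlt : Real.exp (-(p * t)) < 1 := Real.exp_lt_one_iff.mpr (by nlinarith)
  have nz : ‖z‖ < 1 := by rw [hz, Complex.norm_exp]; simpa using hlt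
  have nw : ‖w‖ < 1 := by rw [hw, Complex.norm_exp]; simpa using hlt
  have hterm : ∀ i : ℕ × ℕ, Complex.exp (-(halfPt (p + q * Complex.I) (p - q * Complex.I) i * t))
      = Complex.exp (-(p * t)) * (z ^ i.1 * w ^ i.2) := by
    intro i
    rw [hz, hw, ← Complex.exp_nat_mul, ← Complex.exp_nat_mul, ← Complex.exp_add,
      ← Complex.exp_add, halfPt]
    congr 1
    ring
  simp_rw [hterm]
  rw [tsum_mul_left, ← tsum_mul_tsum_of_summable_norm (f := fun a : ℕ => z ^ a) (g := fun b : ℕ => w ^ b)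
    (by simpa using summable_geometric_of_lt_one (norm_nonneg z) nz)
    (by simpa using summable_geometric_of_lt_one (norm_nonneg w) nw),
    tsum_geometric_of_norm_lt_one nz, tsum_geometric_of_norm_lt_one nw]
  have hz1 : 1 - z ≠ 0 := by
    intro h; rw [sub_eq_zero] at h; rw [← h] at nz; simp at nz
  have hw1 : 1 - w ≠ 0 := by
    intro h; rw [sub_eq_zero] at h; rw [← h] at nw; simp at nw
  have hprod : (1 - z) * (1 - w) = Complex.exp (-(p * t)) *
      (2 * (Real.cosh (p * t) - Real.cos (q * t) : ℝ)) := by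
    have e1 : z = Complex.exp (-(p * t)) * Complex.exp (-(q * t) * Complex.I) := by
      rw [hz, ← Complex.exp_add]; congr 1; ring
    have e2 : w = Complex.exp (-(p * t)) * Complex.exp ((q * t) * Complex.I) := by
      rw [hw, ← Complex.exp_add]; congr 1; ring
    have e3 : Complex.exp (-(q * t) * Complex.I) * Complex.exp ((q * t) * Complex.I) = 1 := by
      rw [← Complex.exp_add]; simp
    have e4 : Complex.exp (-(p * t)) * Complex.exp (p * t) = 1 := by
      rw [← Complex.exp_add]; simp
    push_cast
    rw [Complex.cosh, Complex.cos, e1, e2]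
    linear_combination (Complex.exp (-(p * t))) ^ 2 * e3 - e4
  have hE : Complex.exp (-(p * t)) ≠ 0 := Complex.exp_ne_zero _
  have hD : (2 * (Real.cosh (p * t) - Real.cos (q * t) : ℝ) : ℂ) ≠ 0 := by
    intro h
    rw [h, mul_zero] at hprod
    exact mul_ne_zero hz1 hw1 hprod
  rw [← mul_inv, hprod]
  field_simp

/-- After the substitution `x = t²` the moment integral is computed by integrating the exponential
expansion term by term. -/
lemma moment_eq_tsum (p q : ℝ) (hp : 0 < p) (n : ℕ) :
    ((∫ x in Set.Ioi (0 : ℝ), x ^ (n + 1) / (Real.cosh (p * √x) - Real.cos (q * √x)) : ℝ) : ℂ)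
      = 4 * (2 * n + 3).factorial *
        ∑' i : ℕ × ℕ, ((halfPt (p + q * Complex.I) (p - q * Complex.I) i) ^ (2 * n + 4))⁻¹ := by
  have hre : ∀ i, 0 < (halfPt (p + q * Complex.I) (p - q * Complex.I) i).re := fun i => by
    rw [halfPt_re]; positivity
  -- substitute `x = t ^ 2`
  have hsub := integral_comp_rpow_Ioi_of_pos
    (g := fun x : ℝ => x ^ (n + 1) / (Real.cosh (p * √x) - Real.cos (q * √x))) (p := 2) two_pos
  rw [← hsub, ← integral_complex_ofReal]
  have hpt : ∀ t ∈ Set.Ioi (0 : ℝ),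
      (((2 * t ^ ((2 : ℝ) - 1)) • ((t ^ (2 : ℝ)) ^ (n + 1) /
        (Real.cosh (p * √(t ^ (2 : ℝ))) - Real.cos (q * √(t ^ (2 : ℝ))))) : ℝ) : ℂ)
      = 4 * ∑' i : ℕ × ℕ, ((t : ℂ) ^ (2 * n + 3) *
          Complex.exp (-(halfPt (p + q * Complex.I) (p - q * Complex.I) i * t))) := by
    intro t ht
    have ht0 : (0 : ℝ) < t := ht
    have e1 : t ^ ((2 : ℝ) - 1) = t := by norm_num
    have e2 : t ^ (2 : ℝ) = t ^ 2 := by norm_num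
    rw [e1, e2, Real.sqrt_sq ht0.le, tsum_mul_left, inv_cosh_sub_cos p q hp ht0, smul_eq_mul]
    push_cast
    rw [mul_one_div, div_mul_eq_div_div]
    ring
  rw [setIntegral_congr_fun measurableSet_Ioi hpt, integral_const_mul,
    ← integral_tsum_of_summable_integral_norm (fun i => integrable_pow_mul_exp (hre i) _)]
  · simp_rw [integral_pow_mul_exp (hre _)]
    rw [tsum_mul_left]
    ring
  · simp_rw [integral_norm_pow_mul_exp (hre _), halfPt_re]
    exact (summable_halfPt hp (by omega)).mul_left _

/-! ### Moment integrals as lattice sums -/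

/-- Even lattice sums about the half period `(ω₁ + ω₂) / 2`, split into quadrants; opposite quadrants
contribute equally. -/
lemma PeriodPair.sumInvPow_half (L : PeriodPair) (r : ℕ) (hr : 2 < r) (he : Even r) :
    L.sumInvPow ((L.ω₁ + L.ω₂) / 2) r
      = 2 * ∑' i : ℕ × ℕ, (halfPt L.ω₁ L.ω₂ i ^ r)⁻¹
        + 2 * ∑' i : ℕ × ℕ, (halfPt L.ω₁ (-L.ω₂) i ^ r)⁻¹ := by
  let f : ℤ × ℤ → ℂ := fun x =>
    ((((x.1 : ℂ) + 1 / 2) * L.ω₁ + ((x.2 : ℂ) + 1 / 2) * L.ω₂) ^ r)⁻¹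
  let e : ℤ × ℤ ≃ L.lattice :=
    ((Equiv.addRight (1 : ℤ)).prodCongr (Equiv.addRight (1 : ℤ))).trans
      L.latticeEquivProd.symm.toEquiv
  have hfe : ∀ x, ((((e x : L.lattice) : ℂ) - (L.ω₁ + L.ω₂) / 2) ^ r)⁻¹ = f x := by
    intro x
    have : ((e x : L.lattice) : ℂ) = ((x.1 + 1 : ℤ) : ℂ) * L.ω₁ + ((x.2 + 1 : ℤ) : ℂ) * L.ω₂ :=
      L.latticeEquiv_symm_apply (x.1 + 1, x.2 + 1)
    rw [this]
    simp only [f]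
    push_cast
    congr 2
    ring
  have hsum := L.hasSum_sumInvPow ((L.ω₁ + L.ω₂) / 2) hr
  have hf : HasSum f (L.sumInvPow ((L.ω₁ + L.ω₂) / 2) r) := by
    rw [← e.hasSum_iff] at hsum
    exact hsum.congr_fun fun x => (hfe x).symm
  have hneg : ∀ m n : ℤ, f (-(m + 1), -(n + 1)) = f (m, n) := by
    intro m n
    simp only [f]
    rw [← he.neg_pow]
    push_cast
    congr 2
    ring
  have hg : ∀ m : ℤ, (∑' n : ℤ, f (-(m + 1), n)) = ∑' n : ℤ, f (m, n) := by
    intro m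
    rw [← ((Equiv.addRight (1 : ℤ)).trans (Equiv.neg ℤ)).tsum_eq]
    exact tsum_congr fun n => hneg m n
  have hs := hf.summable
  have hrow : ∀ m : ℤ, Summable fun n : ℤ => f (m, n) := fun m => hs.prod_factor m
  have s1 : Summable fun i : ℕ × ℕ => f ((i.1 : ℤ), (i.2 : ℤ)) :=
    hs.comp_injective (i := fun i : ℕ × ℕ => ((i.1 : ℤ), (i.2 : ℤ))) fun a b h => by
      simp only [Prod.mk.injEq, Nat.cast_inj] at h
      exact Prod.ext h.1 h.2
  have s2 : Summable fun i : ℕ × ℕ => f ((i.1 : ℤ), -((i.2 : ℤ) + 1)) :=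
    hs.comp_injective (i := fun i : ℕ × ℕ => ((i.1 : ℤ), -((i.2 : ℤ) + 1))) fun a b h => by
      simp only [Prod.mk.injEq, Nat.cast_inj, neg_inj, add_left_inj] at h
      exact Prod.ext h.1 h.2
  have hN : ∀ φ : ℤ → ℂ, Summable φ →
      ∑' n : ℤ, φ n = ∑' n : ℕ, φ n + ∑' n : ℕ, φ (-((n : ℤ) + 1)) := fun φ hφ =>
    tsum_of_nat_of_neg_add_one
      (hφ.comp_injective (i := fun n : ℕ => (n : ℤ)) Nat.cast_injective)
      (hφ.comp_injective (i := fun n : ℕ => -((n : ℤ) + 1)) fun a b h => by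
        simpa using h)
  rw [← hf.tsum_eq, hs.tsum_prod, hN _ hs.prod]
  simp_rw [hg]
  rw [← two_mul, ← mul_add]
  congr 1
  simp_rw [hN _ (hrow _)]
  rw [Summable.tsum_add s1.prod s2.prod, ← s1.tsum_prod, ← s2.tsum_prod]
  congr 1
  refine tsum_congr fun i => ?_
  simp only [f, halfPt]
  push_cast
  congr 2
  ring

/-- The signed sum of the two moment integrals is a single sum over the rhombic lattice: each integral
supplies one pair of opposite quadrants. -/
lemma moments_eq_sumInvPow {a b : ℝ} (ha : 0 < a) (hb : 0 < b) (n : ℕ) :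
    (((∫ x in Set.Ioi (0 : ℝ), x ^ (n + 1) / (Real.cos (b * √x) - Real.cosh (a * √x)))
      + (-1 : ℝ) ^ (n + 1) * (∫ x in Set.Ioi (0 : ℝ), x ^ (n + 1) /
        (Real.cosh (b * √x) - Real.cos (a * √x))) : ℝ) : ℂ)
      = -2 * ((2 * n + 3).factorial * (rhombic a b ha hb).sumInvPow a (2 * n + 4)) := by
  have h1 := moment_eq_tsum a b ha n
  have h2 := moment_eq_tsum b a hb n
  have hneg : (∫ x in Set.Ioi (0 : ℝ), x ^ (n + 1) / (Real.cos (b * √x) - Real.cosh (a * √x)))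
      = -∫ x in Set.Ioi (0 : ℝ), x ^ (n + 1) / (Real.cosh (a * √x) - Real.cos (b * √x)) := by
    rw [← integral_neg]
    refine setIntegral_congr_fun measurableSet_Ioi fun x _ => ?_
    rw [← div_neg, neg_sub]
  have hL := (rhombic a b ha hb).sumInvPow_half (2 * n + 4) (by omega) ⟨n + 2, by ring⟩
  have hω₁ : (rhombic a b ha hb).ω₁ = a + b * Complex.I := rfl
  have hω₂ : (rhombic a b ha hb).ω₂ = a - b * Complex.I := rfl
  have hhalf : ((rhombic a b ha hb).ω₁ + (rhombic a b ha hb).ω₂) / 2 = (a : ℂ) := by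
    rw [hω₁, hω₂]; ring
  rw [hhalf, hω₁, hω₂] at hL
  -- `b + a i` and `b - a i` are `-i` times `-(a - b i)` and `a + b i`
  have hrot : ∀ i : ℕ × ℕ, ((halfPt (b + a * Complex.I) (b - a * Complex.I) i) ^ (2 * n + 4))⁻¹
      = (-1) ^ n * ((halfPt (a + b * Complex.I) (-(a - b * Complex.I)) i.swap) ^ (2 * n + 4))⁻¹ := by
    intro i
    have e : halfPt (b + a * Complex.I) (b - a * Complex.I) i
        = -Complex.I * halfPt (a + b * Complex.I) (-(a - b * Complex.I)) i.swap := by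
      simp only [halfPt, Prod.fst_swap, Prod.snd_swap]
      linear_combination ((b : ℂ) * (i.1 + i.2 + 1)) * Complex.I_sq
    have e2 : (-Complex.I) ^ (2 * n + 4) = (-1) ^ n := by
      rw [show 2 * n + 4 = 2 * (n + 2) by ring, pow_mul, neg_sq, Complex.I_sq, pow_add]
      norm_num
    rw [e, mul_pow, e2, mul_inv]
    congr 1
    rw [← inv_pow]
    norm_num
  have hswap := (Equiv.prodComm ℕ ℕ).tsum_eq fun i : ℕ × ℕ =>
    ((halfPt (a + b * Complex.I) (-(a - b * Complex.I)) i) ^ (2 * n + 4))⁻¹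
  simp only [Equiv.prodComm_apply] at hswap
  rw [tsum_congr hrot, tsum_mul_left, hswap] at h2
  have hsq : ((-1 : ℂ) ^ n) * (-1) ^ n = 1 := by
    rw [← mul_pow]; norm_num
  rw [hneg]
  push_cast
  rw [h1, h2, hL, pow_succ]
  linear_combination (-4 * ((2 * n + 3).factorial : ℂ) * ∑' i : ℕ × ℕ,
      ((halfPt (a + b * Complex.I) (-(a - b * Complex.I)) i) ^ (2 * n + 4))⁻¹) * hsq

/-! ### The recurrence -/

lemma sum_range_even {M : Type*} [AddCommMonoid M] (f : ℕ → M) (hf : ∀ j, f (2 * j + 1) = 0) (m : ℕ) :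
    ∑ i ∈ Finset.range (2 * m + 1), f i = ∑ j ∈ Finset.range (m + 1), f (2 * j) := by
  induction m with
  | zero => simp
  | succ m ih =>
    rw [show 2 * (m + 1) + 1 = 2 * m + 1 + 1 + 1 by ring, Finset.sum_range_succ,
      Finset.sum_range_succ, ih, hf, add_zero, Finset.sum_range_succ _ (m + 1)]
    rfl

/-- Leibniz' rule applied to `G'' = -4 - 8 c G - 3 G²` at a zero of `G` about which `G` is even. -/
lemma iteratedDeriv_recurrence {G : ℂ → ℂ} {a c : ℂ} (hG : AnalyticAt ℂ G a)
    (hode : deriv (deriv G) =ᶠ[nhds a] fun z => -4 + (-8 * c * G z + -3 * (G z * G z)))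
    (h0 : G a = 0) (hodd : ∀ j, iteratedDeriv (2 * j + 1) G a = 0) :
    iteratedDeriv 2 G a = -4 ∧ iteratedDeriv 4 G a = 32 * c ∧
    ∀ n : ℕ, iteratedDeriv (2 * (n + 2) + 2) G a =
      -8 * c * iteratedDeriv (2 * (n + 1) + 2) G a - 3 * ∑ j ∈ Finset.range (n + 1),
        (Nat.choose (2 * n + 4) (2 * j + 2) : ℂ) * iteratedDeriv (2 * j + 2) G a
          * iteratedDeriv (2 * (n - j) + 2) G a := by
  have hC : ∀ N : ℕ, ContDiffAt ℂ N G a := fun N => hG.contDiffAt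
  have hshift : ∀ N, iteratedDeriv (N + 2) G a
      = iteratedDeriv N (fun z => -4 + (-8 * c * G z + -3 * (G z * G z))) a := by
    intro N
    rw [iteratedDeriv_succ', iteratedDeriv_succ']
    exact hode.iteratedDeriv_eq N
  have h2 : iteratedDeriv 2 G a = -4 := by
    rw [hshift 0, iteratedDeriv_zero, h0]; ring
  have hstep : ∀ N, 0 < N → iteratedDeriv (N + 2) G a = -8 * c * iteratedDeriv N G a
      - 3 * ∑ i ∈ Finset.range (N + 1),
        (N.choose i : ℂ) * iteratedDeriv i G a * iteratedDeriv (N - i) G a := by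
    intro N hN
    have c1 : ContDiffAt ℂ N (fun z => -8 * c * G z) a := contDiffAt_const.mul (hC N)
    have c2 : ContDiffAt ℂ N (fun z => G z * G z) a := (hC N).mul (hC N)
    rw [hshift, iteratedDeriv_const_add hN, iteratedDeriv_fun_add c1 (contDiffAt_const.mul c2),
      iteratedDeriv_const_mul_field, iteratedDeriv_const_mul_field,
      iteratedDeriv_fun_mul (hC N) (hC N)]
    ring
  refine ⟨h2, ?_, fun n => ?_⟩
  · rw [show (4 : ℕ) = 2 + 2 by rfl, hstep 2 two_pos, h2]
    have h1 := hodd 0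
    simp only [mul_zero, zero_add] at h1
    simp [Finset.sum_range_succ, h0, h1]
    ring
  · have e0 : iteratedDeriv 0 G a = 0 := by rw [iteratedDeriv_zero, h0]
    rw [hstep (2 * (n + 2)) (by omega), sum_range_even _ (fun j => by rw [hodd]; ring),
      Finset.sum_range_succ, Finset.sum_range_succ']
    simp only [mul_zero, Nat.sub_self, e0, add_zero, zero_mul]
    congr 2
    refine Finset.sum_congr rfl fun j hj => ?_
    have hj' : j < n + 1 := Finset.mem_range.mp hj
    rw [show 2 * (n + 2) - 2 * (j + 1) = 2 * (n - j) + 2 by omega]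
    rfl

/-- The Taylor coefficients of `-2 (℘ - e)` at the half period `a` are lattice sums; the even ones are the
moment integrals. -/
lemma iteratedDeriv_weierstrassP_half {a b : ℝ} (ha : 0 < a) (hb : 0 < b) (e : ℂ) (N : ℕ) :
    iteratedDeriv (N + 1) (fun z => -2 * ((rhombic a b ha hb).weierstrassP z - e)) a
      = -2 * ((N + 2).factorial * (rhombic a b ha hb).sumInvPow a (N + 3)) := by
  have hmem : (a : ℂ) ∉ (rhombic a b ha hb).lattice :=
    rhombic_real_notMem ha hb ⟨ha, by linarith⟩
  have h := (rhombic a b ha hb).iteratedDeriv_weierstrassPExcept_self (a : ℂ) (n := N + 1)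
  rw [PeriodPair.weierstrassPExcept_of_notMem _ _ hmem] at h
  have hs : (fun z => -2 * ((rhombic a b ha hb).weierstrassP z - e))
      = fun z => -2 * ((-e) + (rhombic a b ha hb).weierstrassP z) := by
    funext z; ring
  rw [hs, iteratedDeriv_const_mul_field, iteratedDeriv_const_add (Nat.succ_pos N), h]
  simp

/-- `℘` is even about the half period `a`. -/
lemma rhombic_reflect {a b : ℝ} (ha : 0 < a) (hb : 0 < b) (z : ℂ) :
    (rhombic a b ha hb).weierstrassP (2 * a - z) = (rhombic a b ha hb).weierstrassP z := by
  rw [← PeriodPair.weierstrassP_neg, neg_sub]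
  exact PeriodPair.weierstrassP_sub_coe _ z ⟨_, rhombic_two_a_mem ha hb⟩

theorem Iminus_recurrence (k : ℝ) (hk : k ∈ Set.Ioo (0 : ℝ) 1) :
    Iminus k 0 = -4 ∧
    Iminus k 1 = 32 * (1 - 2 * k ^ 2) ∧
    ∀ n : ℕ, Iminus k (n + 2) =
      -8 * (1 - 2 * k ^ 2) * Iminus k (n + 1) -
        3 * ∑ j ∈ Finset.range (n + 1),
          (Nat.choose (2 * n + 4) (2 * j + 2) : ℝ) * Iminus k j * Iminus k (n - j) := by
  have hm0 : 0 < k ^ 2 := pow_pos hk.1 2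
  have hm1 : k ^ 2 < 1 := pow_lt_one₀ hk.1.le hk.2 two_ne_zero
  have hb : 0 < ellF (k ^ 2) (π / 2) := ellF_pos hm1
  have ha : 0 < ellF (1 - k ^ 2) (π / 2) := ellF_pos (by linarith)
  have hKb : ellipticK k = ellF (k ^ 2) (π / 2) := rfl
  have hKa : ellipticK (√(1 - k ^ 2)) = ellF (1 - k ^ 2) (π / 2) := by
    rw [ellipticK, Real.sq_sqrt (by linarith)]; rfl
  obtain ⟨he, hg₂⟩ := rhombic_invariants hm0 hm1 ha hb
  set a := ellF (1 - k ^ 2) (π / 2)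
  set b := ellF (k ^ 2) (π / 2)
  set L := rhombic a b ha hb
  set e : ℂ := L.weierstrassP a
  let G : ℂ → ℂ := fun z => -2 * (L.weierstrassP z - e)
  have hmem : (a : ℂ) ∉ L.lattice := rhombic_real_notMem ha hb ⟨ha, by linarith⟩
  have hI : ∀ n, (Iminus k n : ℂ) = iteratedDeriv (2 * n + 2) G a := by
    intro n
    rw [Iminus, hKa, hKb]
    exact (moments_eq_sumInvPow ha hb n).trans
      (iteratedDeriv_weierstrassP_half ha hb e (2 * n + 1)).symm
  have hG : AnalyticAt ℂ G a :=
    analyticAt_const.mul ((L.analyticOnNhd_weierstrassP a hmem).sub analyticAt_const)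
  have hode : deriv (deriv G) =ᶠ[nhds (a : ℂ)]
      fun z => -4 + (-8 * (1 - 2 * (k : ℂ) ^ 2) * G z + -3 * (G z * G z)) := by
    have hd : deriv G = fun z => -2 * L.derivWeierstrassP z := by
      funext z
      rw [← L.deriv_weierstrassP, deriv_const_mul_field, deriv_sub_const]
    filter_upwards [L.isClosed_lattice.isOpen_compl.mem_nhds hmem] with z hz
    rw [hd, ((L.hasDerivAt_derivWeierstrassP hz).const_mul (-2 : ℂ)).deriv, hg₂]
    have he' : e = -(2 / 3) * (1 - 2 * (k : ℂ) ^ 2) := by rw [he]; push_cast; ring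
    simp only [G, he']
    push_cast
    ring
  have hodd : ∀ j, iteratedDeriv (2 * j + 1) G a = 0 := by
    intro j
    have hsymm : (fun z => G (2 * a - z)) = G := by
      funext z
      simp only [G, L, rhombic_reflect]
    have h := congrFun (iteratedDeriv_comp_const_sub (2 * j + 1) G (2 * (a : ℂ))) (a : ℂ)
    rw [hsymm] at h
    have h2a : (2 * a - a : ℂ) = a := by ring
    have hs : (-1 : ℂ) ^ (2 * j + 1) = -1 := Odd.neg_one_pow ⟨j, rfl⟩
    simp only [h2a, hs, neg_smul, one_smul] at h
    exact CharZero.eq_neg_self_iff.mp h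
  obtain ⟨r0, r1, r2⟩ := iteratedDeriv_recurrence hG hode (by simp [G, e]) hodd
  refine ⟨?_, ?_, fun n => ?_⟩
  · have h := (hI 0).trans r0
    exact_mod_cast h
  · have h := (hI 1).trans r1
    exact_mod_cast h
  · have h := r2 n
    simp only [← hI] at h
    exact_mod_cast h
end
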